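/- Assume αχ(M) ≤ 0. Then there exists a function F̃ : ℝ^N → ℝ which is convex on all of ℝ^N, is C¹ on ℝ^N and C^∞ on ln Ω, satisfies ∂F̃/∂u_i (u) = K̃_i(r) − s_α(r)·r_i^α for every u ∈ ℝ^N and every i (where r_i = e^{u_i}), satisfies F̃(u + t𝟙) = F̃(u) for all u ∈ ℝ^N and t ∈ ℝ (𝟙 = (1,…,1)^T), and such that for every u ∈ ln Ω the Hessian of F̃ at u is positive semi-definite of rank N−1 with kernel equal to the line {t𝟙 : t ∈ ℝ}. -/

import Mathlib

/-!
The vector field `K̃_i - s_α r_i^α` is regarded as the one-form `gradForm`. Regrouped by faces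
(`gradForm_eq`), it is `2π Σ du_i`, minus the sum over all faces of the angle one-forms
`θ_i du_i + θ_j du_j + θ_k du_k`, minus `2πχ(M)` times the one-form with coefficients
`r_i^α / Σ r_j^α`. The last one is the differential of `(1 / α) log Σ r_j^α`
(`exists_alpha_potential`), so everything rests on the angle one-form of a single face.

*Existence of a potential.* The generalized angles are continuous but not differentiable where the
triangle degenerates, so closedness is not available directly. Instead, one of the three weights
`A ≥ 0` is replaced by `A + iε`. The real parts of the complex angles of the perturbed triangle are
given by arguments of complex numbers which stay off their branch cuts for all radii
(`good3_perturb`), hence are smooth on the whole space. Their derivative is symmetric, so the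
perturbed one-form is exact (`exists_potential_of_good`). As `ε` tends to `0`, the perturbed angles
converge boundedly to the generalized angles, also for degenerate triangles (`tendsto_cang_opp`,
`tendsto_cang_adj`), and a continuous bounded limit of exact one-forms is exact (`potential_limit`).
This gives the potential of a face (`exists_face_potential`).

*Convexity.* Along a line in direction `v`, minus the angle one-form of a face evaluated at `v` is a
continuous function, which has nonnegative derivative where the face is nondegenerate (`qf_pos`). It
takes only finitely many values where the face is degenerate, as the angles are then `0` or `π`. Such
a function is monotone (`monotone_of_deriv_or_mem`). The remaining part of the gradient has
derivative `-2π αχ(M)` times the variance of `v`, which is nonnegative if `αχ(M) ≤ 0`.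

*Invariance and kernel.* The angles of a face sum up to `π` (`th_sum`), so the components of the
gradient sum up to `0` by Gauss–Bonnet (`sum_extGrad`). Hence the potential is invariant under
translation by constants, which lie in the kernel of the Hessian. Conversely, the quadratic form of a
nondegenerate face vanishes only on vectors which are constant on that face, and the one-skeleton is
connected, so the kernel consists of the constants (`const_of_faces`, `hess_nonneg`).
-/

open Real Filter Topology

namespace IDCP

variable {N : ℕ}

/-- The set of edges: 2-element subsets of vertices contained in some face. -/
def edges (Fc : Finset (Finset (Fin N))) : Finset (Finset (Fin N)) :=
  Fc.biUnion fun f => f.powersetCard 2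

/-- `Fc` is the face set of a triangulation of a closed connected surface:
every face has 3 vertices, every edge lies in exactly two faces, and the
1-skeleton is connected. -/
structure IsTriangulation (Fc : Finset (Finset (Fin N))) : Prop where
  card3 : ∀ f ∈ Fc, f.card = 3
  edge2 : ∀ e ∈ edges Fc, (Fc.filter fun f => e ⊆ f).card = 2
  conn : (SimpleGraph.fromRel fun i j => ({i, j} : Finset (Fin N)) ∈ edges Fc).Connected

/-- Euler characteristic χ(M) = N − |E| + |F|. -/
def chi (Fc : Finset (Finset (Fin N))) : ℤ :=
  (N : ℤ) - ((edges Fc).card : ℤ) + (Fc.card : ℤ)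

/-- Edge length l_ij = √(r_i² + r_j² + 2 r_i r_j I_{ij}). -/
noncomputable def len (I : Finset (Fin N) → ℝ) (r : Fin N → ℝ) (i j : Fin N) : ℝ :=
  Real.sqrt (r i ^ 2 + r j ^ 2 + 2 * r i * r j * I {i, j})

/-- The cosine of the inner angle at `i` in triangle `{i,j,k}`. -/
noncomputable def cosAng (I : Finset (Fin N) → ℝ) (r : Fin N → ℝ) (i j k : Fin N) : ℝ :=
  (len I r i j ^ 2 + len I r i k ^ 2 - len I r j k ^ 2) / (2 * len I r i j * len I r i k)

/-- The auxiliary function Λ. -/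
noncomputable def Lam (x : ℝ) : ℝ :=
  if x ≤ -1 then π else if x ≤ 1 then Real.arccos x else 0

/-- Discrete Gaussian curvature K_i = 2π − Σ_{{i,j,k}∈F} θ_i^{jk}.  Every face
containing `i` appears exactly twice (once for each ordering of `j,k`), whence
the factor 1/2. -/
noncomputable def K (Fc : Finset (Finset (Fin N))) (I : Finset (Fin N) → ℝ)
    (r : Fin N → ℝ) (i : Fin N) : ℝ :=
  2 * π - (1 / 2) * ∑ j, ∑ k,
    (if ({i, j, k} : Finset (Fin N)) ∈ Fc then Real.arccos (cosAng I r i j k) else 0)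

/-- Extended curvature K̃_i = 2π − Σ θ̃_i^{jk}, using the generalized angles Λ. -/
noncomputable def Kt (Fc : Finset (Finset (Fin N))) (I : Finset (Fin N) → ℝ)
    (r : Fin N → ℝ) (i : Fin N) : ℝ :=
  2 * π - (1 / 2) * ∑ j, ∑ k,
    (if ({i, j, k} : Finset (Fin N)) ∈ Fc then Lam (cosAng I r i j k) else 0)

/-- The set Ω of inversive distance circle packing metrics. -/
def Omega (Fc : Finset (Finset (Fin N))) (I : Finset (Fin N) → ℝ) : Set (Fin N → ℝ) :=
  {r | (∀ i, 0 < r i) ∧ ∀ i j k : Fin N, ({i, j, k} : Finset (Fin N)) ∈ Fc →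
    len I r j k < len I r i j + len I r i k}

/-- s_α = 2πχ(M)/‖r‖_α^α. -/
noncomputable def sA (Fc : Finset (Finset (Fin N))) (α : ℝ) (r : Fin N → ℝ) : ℝ :=
  2 * π * (chi Fc : ℝ) / ∑ j, r j ^ α

/-- Back from u-coordinates: r_i = e^{u_i}. -/
noncomputable def rOf (u : Fin N → ℝ) : Fin N → ℝ := fun i => Real.exp (u i)

/-- ln Ω, the image of Ω under the coordinate change r ↦ u, u_i = ln r_i. -/
def lnOmega (Fc : Finset (Finset (Fin N))) (I : Finset (Fin N) → ℝ) : Set (Fin N → ℝ) :=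
  {u | rOf u ∈ Omega Fc I}

/-- `u` solves the α-flow du_i/dt = s_α r_i^α − K_i on the time set `D`,
staying in ln Ω. -/
def IsFlowSol (Fc : Finset (Finset (Fin N))) (I : Finset (Fin N) → ℝ) (α : ℝ)
    (D : Set ℝ) (u : ℝ → Fin N → ℝ) : Prop :=
  ∀ t ∈ D, rOf (u t) ∈ Omega Fc I ∧
    ∀ i, HasDerivWithinAt (fun s => u s i)
      (sA Fc α (rOf (u t)) * rOf (u t) i ^ α - K Fc I (rOf (u t)) i) D t

/-- `u` solves the extended α-flow du_i/dt = s_α r_i^α − K̃_i on the time set `D`. -/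
def IsExtFlowSol (Fc : Finset (Finset (Fin N))) (I : Finset (Fin N) → ℝ) (α : ℝ)
    (D : Set ℝ) (u : ℝ → Fin N → ℝ) : Prop :=
  ∀ t ∈ D, ∀ i, HasDerivWithinAt (fun s => u s i)
      (sA Fc α (rOf (u t)) * rOf (u t) i ^ α - Kt Fc I (rOf (u t)) i) D t

/-- Lk(A): pairs (e,v) with both endpoints of e outside A, v ∈ A, and e,v spanning a face. -/
def Lk (Fc : Finset (Finset (Fin N))) (A : Finset (Fin N)) :
    Finset (Finset (Fin N) × Fin N) :=
  ((edges Fc) ×ˢ (Finset.univ : Finset (Fin N))).filter fun p =>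
    (∀ x ∈ p.1, x ∉ A) ∧ p.2 ∈ A ∧ insert p.2 p.1 ∈ Fc

/-- Euler characteristic χ(F_A) of the subcomplex spanned by A. -/
def chiSub (Fc : Finset (Finset (Fin N))) (A : Finset (Fin N)) : ℤ :=
  (A.card : ℤ) - (((edges Fc).filter (fun e => e ⊆ A)).card : ℤ)
    + ((Fc.filter (fun f => f ⊆ A)).card : ℤ)

/-- The lower bound −Σ_{(e,v)∈Lk(A)}(π − Λ(I_e)) + 2πχ(F_A) defining Y_A. -/
noncomputable def Ybound (Fc : Finset (Finset (Fin N))) (I : Finset (Fin N) → ℝ)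
    (A : Finset (Fin N)) : ℝ :=
  -(∑ p ∈ Lk Fc A, (π - Lam (I p.1))) + 2 * π * (chiSub Fc A : ℝ)

/-- x ∈ Y. -/
noncomputable def memY (Fc : Finset (Finset (Fin N))) (I : Finset (Fin N) → ℝ)
    (x : Fin N → ℝ) : Prop :=
  (∑ i, x i) = 2 * π * (chi Fc : ℝ) ∧
    ∀ A : Finset (Fin N), A.Nonempty → A ≠ Finset.univ → Ybound Fc I A < ∑ i ∈ A, x i

/-- x ∈ Ȳ. -/
noncomputable def memYbar (Fc : Finset (Finset (Fin N))) (I : Finset (Fin N) → ℝ)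
    (x : Fin N → ℝ) : Prop :=
  (∑ i, x i) = 2 * π * (chi Fc : ℝ) ∧
    ∀ A : Finset (Fin N), A.Nonempty → A ≠ Finset.univ → Ybound Fc I A ≤ ∑ i ∈ A, x i

/-- The gradient of the extended α-potential: G(u)_i = K̃_i(r) − s_α(r) r_i^α,
with r = e^u. -/
noncomputable def extGrad (Fc : Finset (Finset (Fin N))) (I : Finset (Fin N) → ℝ)
    (α : ℝ) (u : Fin N → ℝ) (i : Fin N) : ℝ :=
  Kt Fc I (rOf u) i - sA Fc α (rOf u) * rOf u i ^ α

/-! ### Complex angles of a triangle -/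

/-- Heron's polynomial, `16·(area)²` for a Euclidean triangle with squared side lengths `a`, `b`,
`c`. -/
def heron (a b c : ℂ) : ℂ := 4 * b * c - (b + c - a) ^ 2

/-- A complex number whose argument is the angle opposite to the first side, when the squared
side lengths `a`, `b`, `c` are those of a Euclidean triangle. -/
noncomputable def wv (a b c : ℂ) : ℂ := b + c - a + Complex.I * (heron a b c).sqrt

/-- The real part of the complex angle opposite to the first side of the triangle with complex
squared side lengths `a`, `b`, `c`. -/
noncomputable def cang (a b c : ℂ) : ℝ := (wv a b c).arg - (b.arg + c.arg) / 2

/-- A domain where `cang` is smooth: no logarithm or square root in its definition meets its branch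
cut. -/
structure Good (a b c : ℂ) : Prop where
  hb : b ∈ Complex.slitPlane
  hc : c ∈ Complex.slitPlane
  hh : heron a b c ∈ Complex.slitPlane
  hw : wv a b c ∈ Complex.slitPlane

lemma csqrt_sq (z : ℂ) : z.sqrt ^ 2 = z := by
  rw [Complex.sqrt, ← Complex.cpow_nat_mul]; simp

lemma csqrt_re_pos {z : ℂ} (hz : z ∈ Complex.slitPlane) : 0 < z.sqrt.re := by
  rw [Complex.sqrt, Complex.cpow_inv_two_re, Real.sqrt_pos]
  have h0 : z ≠ 0 := Complex.slitPlane_ne_zero hz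
  rcases hz with h | h
  · have := norm_pos_iff.2 h0; linarith
  · have : |z.re| < ‖z‖ := Complex.abs_re_lt_norm.2 h
    have := (abs_lt.1 this).1; linarith

lemma csqrt_ne {z : ℂ} (hz : z ∈ Complex.slitPlane) : z.sqrt ≠ 0 := fun h => by
  have := csqrt_re_pos hz; rw [h] at this; simp at this

lemma hasDerivAt_csqrt {z : ℂ} (hz : z ∈ Complex.slitPlane) :
    HasDerivAt Complex.sqrt (1 / (2 * z.sqrt)) z := by
  have h := (hasDerivAt_id z).cpow_const (c := (2⁻¹ : ℂ)) hz
  have h0 : z ≠ 0 := Complex.slitPlane_ne_zero hz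
  refine h.congr_deriv ?_
  have h2 := csqrt_sq z
  have h3 := csqrt_ne hz
  simp only [id]
  rw [Complex.cpow_sub _ _ h0, Complex.cpow_one]
  change 2⁻¹ * (z.sqrt / z) * 1 = _
  generalize z.sqrt = s at *
  subst h2
  field_simp

lemma heron_swap (a b c : ℂ) : heron b a c = heron a b c := by unfold heron; ring
lemma heron_swap' (a b c : ℂ) : heron a c b = heron a b c := by unfold heron; ring
lemma heron_rot (a b c : ℂ) : heron c a b = heron a b c := by unfold heron; ring
lemma heron_rot' (a b c : ℂ) : heron c b a = heron a b c := by unfold heron; ring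

lemma cang_eq (a b c : ℂ) :
    cang a b c = (Complex.log (wv a b c) - (Complex.log b + Complex.log c) / 2).im := by
  simp [cang, Complex.log_im]

/-- The derivative of the angle, which generalizes
`-2 √b √c sin θ dθ = d(b + c - a) - (b + c - a)(db / b + dc / c) / 2` to complex squared lengths. -/
lemma hasDerivAt_cang {a b c : ℝ → ℂ} {a' b' c' : ℂ} {t : ℝ} (ha : HasDerivAt a a' t)
    (hb : HasDerivAt b b' t) (hc : HasDerivAt c c' t) (hg : Good (a t) (b t) (c t)) :
    HasDerivAt (fun s => cang (a s) (b s) (c s))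
      (((-(b' + c' - a') + (b t + c t - a t) * (b' / b t + c' / c t) / 2) /
        (heron (a t) (b t) (c t)).sqrt).re) t := by
  have hX : HasDerivAt (fun s => b s + c s - a s) (b' + c' - a') t := (hb.add hc).sub ha
  have hh : HasDerivAt (fun s => heron (a s) (b s) (c s))
      (4 * (b' * c t + b t * c') - 2 * (b t + c t - a t) * (b' + c' - a')) t := by
    have := (((hb.const_mul 4).mul hc).sub (hX.pow 2))
    unfold heron
    refine this.congr_deriv ?_
    push_cast; ring
  have hS := (hasDerivAt_csqrt hg.hh).comp t hh
  have hw : HasDerivAt (fun s => wv (a s) (b s) (c s))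
      (b' + c' - a' + Complex.I * (1 / (2 * (heron (a t) (b t) (c t)).sqrt) *
        (4 * (b' * c t + b t * c') - 2 * (b t + c t - a t) * (b' + c' - a')))) t :=
    hX.add (hS.const_mul Complex.I)
  have hL := (hw.clog_real hg.hw).sub (((hb.clog_real hg.hb).add (hc.clog_real hg.hc)).div_const 2)
  simp only [cang_eq]
  have him := (Complex.imCLM.hasFDerivAt.comp_hasDerivAt t hL)
  refine him.congr_deriv ?_
  rw [Complex.imCLM_apply]
  rw [show ∀ z : ℂ, z.re = (Complex.I * z).im by intro z; simp]
  congr 1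
  have e1 := csqrt_sq (heron (a t) (b t) (c t))
  have e2 := csqrt_ne hg.hh
  have e3 := Complex.slitPlane_ne_zero hg.hw
  have e4 := Complex.slitPlane_ne_zero hg.hb
  have e5 := Complex.slitPlane_ne_zero hg.hc
  unfold wv at *
  generalize (heron (a t) (b t) (c t)).sqrt = S at *
  unfold heron at e1
  have e6 : Complex.I ^ 2 = -1 := Complex.I_sq
  generalize Complex.I = i at *
  generalize a t = a at *
  generalize b t = b at *
  generalize c t = c at *
  obtain ⟨β, rfl⟩ : ∃ β, b' = β * b := ⟨b' / b, by field_simp⟩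
  obtain ⟨γ, rfl⟩ : ∃ γ, c' = γ * c := ⟨c' / c, by field_simp⟩
  rw [mul_div_assoc, mul_div_assoc, div_self e4, div_self e5, sub_eq_iff_eq_add, div_eq_iff e3]
  field_simp
  linear_combination (-(β + γ) * i) * e1 + (S * (β * b - β * c + β * a - b * γ + γ * c + γ * a - 2 * a')) * e6

lemma contDiffAt_cang {E : Type*} [NormedAddCommGroup E] [NormedSpace ℝ E] {n : WithTop ℕ∞}
    {a b c : E → ℂ} {u : E} (ha : ContDiffAt ℝ n a u)
    (hb : ContDiffAt ℝ n b u) (hc : ContDiffAt ℝ n c u) (hg : Good (a u) (b u) (c u)) :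
    ContDiffAt ℝ n (fun s => cang (a s) (b s) (c s)) u := by
  have hlog : ∀ {f : E → ℂ}, ContDiffAt ℝ n f u → f u ∈ Complex.slitPlane →
      ContDiffAt ℝ n (fun s => Complex.log (f s)) u := fun hf hm =>
    ((Complex.contDiffAt_log hm).restrict_scalars ℝ).comp u hf
  have hh : ContDiffAt ℝ n (fun s => heron (a s) (b s) (c s)) u := by
    unfold heron; fun_prop
  have hS : ContDiffAt ℝ n (fun s => (heron (a s) (b s) (c s)).sqrt) u := by
    have h1 : ContDiffAt ℝ n
        (fun s => Complex.exp (Complex.log (heron (a s) (b s) (c s)) / 2)) u :=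
      (((hlog hh hg.hh).div_const 2)).cexp
    refine h1.congr_of_eventuallyEq ?_
    have : ∀ᶠ s in 𝓝 u, heron (a s) (b s) (c s) ≠ 0 :=
      hh.continuousAt.eventually_ne (Complex.slitPlane_ne_zero hg.hh)
    filter_upwards [this] with s hs
    exact sqrt_eq_exp hs
  have hw : ContDiffAt ℝ n (fun s => wv (a s) (b s) (c s)) u := by
    unfold wv; fun_prop
  simp only [cang_eq]
  exact Complex.imCLM.contDiff.contDiffAt.comp u
    ((hlog hw hg.hw).sub (((hlog hb hg.hb).add (hlog hc hg.hc)).div_const 2))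

/-- The squared length `e^{2p} + e^{2q} + 2 J e^{p+q}` with a complex weight `J`. -/
noncomputable def sqc (p q : ℝ) (J : ℂ) : ℂ :=
  (Real.exp p : ℂ) ^ 2 + (Real.exp q : ℂ) ^ 2 + 2 * (Real.exp p : ℂ) * (Real.exp q : ℂ) * J

lemma sqc_comm (p q : ℝ) (J : ℂ) : sqc p q J = sqc q p J := by unfold sqc; ring

lemma hasDerivAt_sqc {p q : ℝ → ℝ} {p' q' : ℝ} {t : ℝ} (hp : HasDerivAt p p' t)
    (hq : HasDerivAt q q' t) (J : ℂ) :
    HasDerivAt (fun s => sqc (p s) (q s) J)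
      (2 * Real.exp (p t) * (Real.exp (p t) + Real.exp (q t) * J) * p' +
        2 * Real.exp (q t) * (Real.exp (q t) + Real.exp (p t) * J) * q') t := by
  have h1 := hp.exp.ofReal_comp
  have h2 := hq.exp.ofReal_comp
  have := ((h1.pow 2).add (h2.pow 2)).add (((h1.const_mul 2).mul h2).mul_const J)
  unfold sqc
  refine this.congr_deriv ?_
  push_cast; ring

lemma contDiff_sqc {E : Type*} [NormedAddCommGroup E] [NormedSpace ℝ E] {n : WithTop ℕ∞}
    {p q : E → ℝ} (hp : ContDiff ℝ n p) (hq : ContDiff ℝ n q) (J : ℂ) :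
    ContDiff ℝ n (fun s => sqc (p s) (q s) J) := by
  have h : ∀ {f : E → ℝ}, ContDiff ℝ n f → ContDiff ℝ n (fun s => ((Real.exp (f s) : ℝ) : ℂ)) :=
    fun hf => Complex.ofRealCLM.contDiff.comp hf.exp
  have h1 := h hp
  have h2 := h hq
  unfold sqc; fun_prop

/-- The polynomial with `2 nh / l_ij² / √(heron)` equal to `∂θ_i/∂u_j`; here `P`, `Q`, `R` are
the radii at `i`, `j`, `k`, and `A`, `B`, `C` are the weights of `jk`, `ik`, `ij`. -/
def nh {𝕂 : Type*} [CommRing 𝕂] (P Q R A B C : 𝕂) : 𝕂 :=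
  P * Q * (P * Q * (1 - C ^ 2) + P * R * (A + B * C) + Q * R * (B + A * C))

/-- The complex angle at the vertex with logarithmic radius `x`. -/
noncomputable def angT (A B C : ℂ) (x y z : ℝ) : ℝ := cang (sqc y z A) (sqc x z B) (sqc x y C)

/-- The coefficient `∂θ_i/∂u_j`, up to the common factor `2/√(heron)`. -/
noncomputable def cf (A B C : ℂ) (x y z : ℝ) : ℂ :=
  nh (Real.exp x : ℂ) (Real.exp y) (Real.exp z) A B C / sqc x y C

lemma cf_comm (A B C : ℂ) (x y z : ℝ) : cf A B C x y z = cf B A C y x z := by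
  unfold cf nh; rw [sqc_comm x y]; congr 1; ring

lemma hasDerivAt_angT (A B C : ℂ) {x y z : ℝ → ℝ} {x' y' z' : ℝ} {t : ℝ}
    (hx : HasDerivAt x x' t) (hy : HasDerivAt y y' t) (hz : HasDerivAt z z' t)
    (hg : Good (sqc (y t) (z t) A) (sqc (x t) (z t) B) (sqc (x t) (y t) C)) :
    HasDerivAt (fun s => angT A B C (x s) (y s) (z s))
      ((2 * (cf A B C (x t) (y t) (z t) * (y' - x') + cf A C B (x t) (z t) (y t) * (z' - x')) /
        (heron (sqc (y t) (z t) A) (sqc (x t) (z t) B) (sqc (x t) (y t) C)).sqrt).re) t := by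
  refine (hasDerivAt_cang (hasDerivAt_sqc hy hz A) (hasDerivAt_sqc hx hz B)
    (hasDerivAt_sqc hx hy C) hg).congr_deriv ?_
  congr 2
  have e1 := Complex.slitPlane_ne_zero hg.hb
  have e2 := Complex.slitPlane_ne_zero hg.hc
  unfold cf nh
  unfold sqc at *
  field_simp
  ring

/-! ### Perturbed triangles and their real limits -/

lemma re_mk (x y : ℝ) : ((x : ℂ) + y * Complex.I).re = x := by simp

lemma im_mk (x y : ℝ) : ((x : ℂ) + y * Complex.I).im = y := by simp

lemma heron_perturb (a b c δ : ℝ) : heron (a + δ * Complex.I) b c =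
    ((4 * b * c - (b + c - a) ^ 2 + δ ^ 2 : ℝ) : ℂ) + ((2 * δ * (b + c - a) : ℝ) : ℂ) * Complex.I := by
  unfold heron
  push_cast
  linear_combination (-(δ : ℂ) ^ 2) * Complex.I_sq

lemma heron_perturb_mem {a b c δ : ℝ} (hb : 0 < b) (hc : 0 < c) (hδ : 0 < δ) :
    heron (a + δ * Complex.I) b c ∈ Complex.slitPlane := by
  rw [heron_perturb]
  by_cases h : b + c - a = 0
  · left; rw [re_mk, h]; nlinarith [mul_pos hb hc, sq_nonneg δ]
  · right; rw [im_mk]; simp only [ne_eq, mul_eq_zero, not_or]; exact ⟨⟨by norm_num, hδ.ne'⟩, h⟩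

lemma mem_slit_of_im_pos {z : ℂ} (h : 0 < z.im) : z ∈ Complex.slitPlane := Or.inr h.ne'

lemma mem_slit_ofReal {x : ℝ} (h : 0 < x) : (x : ℂ) ∈ Complex.slitPlane := Or.inl (by simpa)

lemma mem_slit_perturb {a δ : ℝ} (h : 0 < a) : (a + δ * Complex.I : ℂ) ∈ Complex.slitPlane :=
  Or.inl (by simpa)

/-- Adding a positive imaginary part to the opposite squared side keeps `wv` in the upper
half-plane, so that no branch cut is met. -/
lemma wv_opp_im {a b c δ : ℝ} (hb : 0 < b) (hc : 0 < c) (hδ : 0 < δ) :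
    0 < (wv (a + δ * Complex.I) b c).im := by
  have hm := heron_perturb_mem (a := a) hb hc hδ
  have h1 := csqrt_re_pos hm
  have h2 := csqrt_sq (heron (a + δ * Complex.I) b c)
  unfold wv
  set S := (heron (a + δ * Complex.I) b c).sqrt
  rw [heron_perturb] at h2
  have hr := congrArg Complex.re h2
  have hi := congrArg Complex.im h2
  rw [re_mk, sq, Complex.mul_re] at hr
  rw [im_mk, sq, Complex.mul_im] at hi
  have hg : ((b : ℂ) + c - (a + δ * Complex.I) + Complex.I * S).im = S.re - δ := by
    simp; ring
  rw [hg]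
  by_contra! hcon
  have hbc : 0 < b * c := by positivity
  have h3 : S.re ^ 2 * S.im ^ 2 = δ ^ 2 * (b + c - a) ^ 2 := by
    have : S.re * S.im = δ * (b + c - a) := by linarith
    rw [← mul_pow, this, mul_pow]
  have h4 : S.re ^ 2 ≤ δ ^ 2 := by gcongr; linarith
  have h5 : (b + c - a) ^ 2 ≤ S.im ^ 2 := by
    have h6 : S.re ^ 2 * (b + c - a) ^ 2 ≤ S.re ^ 2 * S.im ^ 2 := by
      rw [h3]; exact mul_le_mul_of_nonneg_right h4 (sq_nonneg _)
    exact le_of_mul_le_mul_left h6 (by positivity)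
  nlinarith

/-- The analogue of `wv_opp_im` for a perturbation of one of the adjacent sides. -/
lemma wv_adj_im {a b c δ : ℝ} (hb : 0 < b) (hc : 0 < c) (hδ : 0 < δ) :
    0 < (wv b (a + δ * Complex.I) c).im := by
  have hm := heron_perturb_mem (a := a) hb hc hδ
  have h1 := csqrt_re_pos hm
  unfold wv
  rw [heron_swap]
  simp
  linarith

lemma good_opp {a b c δ : ℝ} (hb : 0 < b) (hc : 0 < c) (hδ : 0 < δ) :
    Good (a + δ * Complex.I) b c where
  hb := mem_slit_ofReal hb
  hc := mem_slit_ofReal hc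
  hh := heron_perturb_mem hb hc hδ
  hw := mem_slit_of_im_pos (wv_opp_im hb hc hδ)

lemma good_adj {a b c δ : ℝ} (ha : 0 < a) (hb : 0 < b) (hc : 0 < c) (hδ : 0 < δ) :
    Good b (a + δ * Complex.I) c where
  hb := mem_slit_perturb ha
  hc := mem_slit_ofReal hc
  hh := by rw [heron_swap]; exact heron_perturb_mem hb hc hδ
  hw := mem_slit_of_im_pos (wv_adj_im hb hc hδ)

lemma heron_real (a b c : ℝ) : heron (a : ℂ) b c = ((4 * b * c - (b + c - a) ^ 2 : ℝ) : ℂ) := by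
  unfold heron; push_cast; ring

lemma csqrt_ofReal {x : ℝ} (h : 0 ≤ x) : (x : ℂ).sqrt = (√x : ℂ) := by
  rw [Complex.sqrt_eq_real_add_ite]
  simp [abs_of_nonneg h]

lemma wv_real {a b c : ℝ} (h : 0 ≤ 4 * b * c - (b + c - a) ^ 2) :
    wv (a : ℂ) b c = ((b + c - a : ℝ) : ℂ) + (√(4 * b * c - (b + c - a) ^ 2) : ℂ) * Complex.I := by
  unfold wv
  rw [heron_real, csqrt_ofReal h]
  push_cast; ring

lemma good_real {a b c : ℝ} (hb : 0 < b) (hc : 0 < c) (h : 0 < 4 * b * c - (b + c - a) ^ 2) :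
    Good a b c where
  hb := mem_slit_ofReal hb
  hc := mem_slit_ofReal hc
  hh := by rw [heron_real]; exact mem_slit_ofReal h
  hw := by
    apply mem_slit_of_im_pos
    rw [wv_real h.le]; simpa using h

lemma norm_eq_sqrt_sq (x y : ℝ) : ‖(x : ℂ) + y * Complex.I‖ = √(x ^ 2 + y ^ 2) :=
  Complex.norm_add_mul_I x y

/-- With `Q` Heron's polynomial, `X = b + c - a` and `p = 2 √b √c`, the complex number below is the
limit of `wv` when the imaginary perturbation of a side tends to `0`, the sign `σ` being that of the
limiting branch of `√Q` for `Q < 0`. It is nonzero and its argument is the generalized angle, for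
nondegenerate triangles (`0 < Q`) as well as for degenerate ones. -/
lemma arccos_limit {X Q p σ : ℝ} (hp : 0 < p) (hQ : Q = p ^ 2 - X ^ 2) (hσ : σ ^ 2 = 1) :
    (((X - σ * √((|Q| - Q) / 2) : ℝ) : ℂ) + (√((|Q| + Q) / 2) : ℝ) * Complex.I ≠ 0) ∧
    Real.arccos ((X - σ * √((|Q| - Q) / 2)) /
      ‖((X - σ * √((|Q| - Q) / 2) : ℝ) : ℂ) + (√((|Q| + Q) / 2) : ℝ) * Complex.I‖) =
    Real.arccos (X / p) := by
  rw [norm_eq_sqrt_sq]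
  rcases le_or_gt 0 Q with h | h
  · rw [abs_of_nonneg h]
    simp only [sub_self, zero_div, Real.sqrt_zero, mul_zero, sub_zero, add_self_div_two]
    have h1 : X ^ 2 + √Q ^ 2 = p ^ 2 := by rw [Real.sq_sqrt h, hQ]; ring
    constructor
    · rw [← norm_pos_iff, norm_eq_sqrt_sq, h1]; positivity
    · rw [h1, Real.sqrt_sq hp.le]
  · rw [abs_of_neg h]
    have e1 : (-Q - Q) / 2 = -Q := by ring
    have e2 : (-Q + Q) / 2 = 0 := by ring
    rw [e1, e2]
    have hs : (σ * √(-Q)) ^ 2 = -Q := by rw [mul_pow, hσ, Real.sq_sqrt (by linarith)]; ring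
    set s := σ * √(-Q)
    have hsX : s ^ 2 < X ^ 2 := by rw [hs, hQ]; nlinarith
    simp only [Real.sqrt_zero, ne_eq, OfNat.ofNat_ne_zero, not_false_eq_true, zero_pow, add_zero,
      Real.sqrt_sq_eq_abs, Complex.ofReal_zero, zero_mul, Complex.ofReal_eq_zero]
    have hpX : p ^ 2 < X ^ 2 := by linarith
    have hab := abs_lt.1 (sq_lt_sq.1 hsX)
    rw [sq_lt_sq, abs_of_pos hp] at hpX
    rcases le_or_gt 0 X with hX | hX
    · rw [abs_of_nonneg hX] at *
      have : 0 < X - s := by linarith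
      refine ⟨this.ne', ?_⟩
      rw [abs_of_pos this, div_self this.ne', Real.arccos_one, eq_comm, Real.arccos_eq_zero,
        one_le_div hp]
      exact hpX.le
    · rw [abs_of_neg hX] at *
      have : X - s < 0 := by linarith
      refine ⟨this.ne, ?_⟩
      rw [abs_of_neg this, div_neg, div_self this.ne, Real.arccos_neg_one, eq_comm,
        Real.arccos_eq_pi, div_le_iff₀ hp]
      linarith

/-- The angle opposite to the first side, with squared side lengths `a`, `b`, `c`; it is `0` or `π`
when the triangle inequalities fail, as `Real.arccos` is constant outside `[-1, 1]`. -/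
noncomputable def rang (a b c : ℝ) : ℝ := Real.arccos ((b + c - a) / (2 * √b * √c))

lemma cang_real {a b c : ℝ} (hb : 0 < b) (hc : 0 < c) (h : 0 < 4 * b * c - (b + c - a) ^ 2) :
    cang a b c = rang a b c := by
  unfold cang rang
  rw [wv_real h.le, Complex.arg_ofReal_of_nonneg hb.le, Complex.arg_ofReal_of_nonneg hc.le,
    Complex.arg_of_im_nonneg_of_ne_zero (by simp [Real.sqrt_nonneg]), norm_eq_sqrt_sq, Real.sq_sqrt h.le]
  · have : (b + c - a) ^ 2 + (4 * b * c - (b + c - a) ^ 2) = (2 * √b * √c) ^ 2 := by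
      rw [mul_pow, mul_pow, Real.sq_sqrt hb.le, Real.sq_sqrt hc.le]; ring
    rw [this, Real.sqrt_sq (by positivity)]
    simp
  · intro h0
    have := congrArg Complex.im h0
    simp at this
    have := Real.sqrt_pos.2 h
    linarith

/-- The limit of the square root of Heron's polynomial under the perturbation of `heron_perturb`, with
`Q` its real value and `X = b + c - a`. -/
lemma tendsto_csqrt (Q X : ℝ) : Tendsto
    (fun δ : ℝ => (((Q + δ ^ 2 : ℝ) : ℂ) + ((2 * δ * X : ℝ) : ℂ) * Complex.I).sqrt) (𝓝[>] 0)
    (𝓝 (√((|Q| + Q) / 2) + (if 0 ≤ X then 1 else -1 : ℝ) * √((|Q| - Q) / 2) * Complex.I)) := by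
  set f : ℝ → ℂ := fun δ => √((‖(((Q + δ ^ 2 : ℝ) : ℂ) + ((2 * δ * X : ℝ) : ℂ) * Complex.I)‖ +
    (Q + δ ^ 2)) / 2) + (if 0 ≤ X then 1 else -1 : ℝ) *
    √((‖(((Q + δ ^ 2 : ℝ) : ℂ) + ((2 * δ * X : ℝ) : ℂ) * Complex.I)‖ - (Q + δ ^ 2)) / 2) *
    Complex.I with hf
  have hc : Continuous f := by rw [hf]; fun_prop
  have h0 := hc.tendsto 0
  have : f 0 = √((|Q| + Q) / 2) + (if 0 ≤ X then 1 else -1 : ℝ) * √((|Q| - Q) / 2) * Complex.I := by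
    simp [hf]
  rw [this] at h0
  refine (h0.mono_left nhdsWithin_le_nhds).congr' ?_
  filter_upwards [self_mem_nhdsWithin] with δ hδ
  rw [Complex.sqrt_eq_real_add_ite, hf]
  have hδ : 0 < δ := hδ
  have : (0 ≤ 2 * δ * X) ↔ 0 ≤ X := by
    constructor
    · intro h; by_contra! h'; nlinarith [mul_pos hδ (neg_pos.2 h')]
    · intro h; positivity
  rw [re_mk, im_mk]
  simp only [this]
  split_ifs <;> simp

lemma tendsto_cang_aux {w : ℝ → ℂ} {X Q p σ : ℝ} (hp : 0 < p)
    (hQ : Q = p ^ 2 - X ^ 2) (hσ : σ ^ 2 = 1) (him : ∀ δ > 0, 0 < (w δ).im)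
    (hw : Tendsto w (𝓝[>] 0)
      (𝓝 (((X - σ * √((|Q| - Q) / 2) : ℝ) : ℂ) + (√((|Q| + Q) / 2) : ℝ) * Complex.I))) :
    Tendsto (fun δ => (w δ).arg) (𝓝[>] 0) (𝓝 (Real.arccos (X / p))) := by
  obtain ⟨h1, h2⟩ := arccos_limit hp hQ hσ
  rw [← h2]
  have hlim := ((Complex.continuous_re.tendsto _).comp hw).div hw.norm (norm_ne_zero_iff.2 h1)
  have := (Real.continuous_arccos.tendsto _).comp hlim
  simp only [Complex.add_re, Complex.ofReal_re, Complex.mul_re, Complex.I_re, mul_zero,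
    Complex.ofReal_im, Complex.I_im, mul_one, sub_self, add_zero] at this
  refine this.congr' ?_
  filter_upwards [self_mem_nhdsWithin] with δ hδ
  have h3 := him δ hδ
  rw [Complex.arg_of_im_nonneg_of_ne_zero h3.le]
  · rfl
  · intro h0; rw [h0] at h3; simp at h3

lemma tendsto_arg_perturb {a : ℝ} (ha : 0 < a) :
    Tendsto (fun δ : ℝ => (a + δ * Complex.I : ℂ).arg) (𝓝[>] 0) (𝓝 0) := by
  have h1 : ContinuousAt (fun δ : ℝ => (a + δ * Complex.I : ℂ).arg) 0 := by
    refine ContinuousAt.comp (g := Complex.arg) (Complex.continuousAt_arg (mem_slit_perturb ha)) ?_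
    fun_prop
  have := h1.tendsto
  simp [Complex.arg_ofReal_of_nonneg ha.le] at this
  exact this.mono_left nhdsWithin_le_nhds

lemma tendsto_cang_opp {a b c : ℝ} (hb : 0 < b) (hc : 0 < c) :
    Tendsto (fun δ : ℝ => cang (a + δ * Complex.I) b c) (𝓝[>] 0) (𝓝 (rang a b c)) := by
  unfold cang rang
  rw [Complex.arg_ofReal_of_nonneg hb.le, Complex.arg_ofReal_of_nonneg hc.le]
  simp only [add_zero, zero_div, sub_zero]
  refine tendsto_cang_aux (σ := if 0 ≤ b + c - a then 1 else -1)
    (Q := 4 * b * c - (b + c - a) ^ 2) (by positivity) ?_ ?_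
    (fun δ hδ => wv_opp_im hb hc hδ) ?_
  · rw [mul_pow, mul_pow, Real.sq_sqrt hb.le, Real.sq_sqrt hc.le]; ring
  · split_ifs <;> norm_num
  · have h := tendsto_csqrt (4 * b * c - (b + c - a) ^ 2) (b + c - a)
    have h2 : Tendsto (fun δ : ℝ => (b + c - (a + δ * Complex.I) : ℂ)) (𝓝[>] 0) (𝓝 (b + c - a)) := by
      have : Continuous (fun δ : ℝ => (b + c - (a + δ * Complex.I) : ℂ)) := by fun_prop
      have := this.tendsto 0
      simp at this
      exact this.mono_left nhdsWithin_le_nhds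
    unfold wv
    simp only [heron_perturb]
    convert h2.add (h.const_mul Complex.I) using 2
    generalize (if 0 ≤ b + c - a then (1 : ℝ) else -1) = σ
    generalize √((|4 * b * c - (b + c - a) ^ 2| - (4 * b * c - (b + c - a) ^ 2)) / 2) = s
    generalize √((|4 * b * c - (b + c - a) ^ 2| + (4 * b * c - (b + c - a) ^ 2)) / 2) = s'
    push_cast
    linear_combination (-(σ : ℂ) * s) * Complex.I_sq

lemma tendsto_cang_adj {a b c : ℝ} (ha : 0 < a) (hb : 0 < b) (hc : 0 < c) :
    Tendsto (fun δ : ℝ => cang b (a + δ * Complex.I) c) (𝓝[>] 0) (𝓝 (rang b a c)) := by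
  unfold cang rang
  rw [Complex.arg_ofReal_of_nonneg hc.le]
  rw [show ∀ x : ℝ, 𝓝 x = 𝓝 (x - (0 + 0) / 2) by intro x; simp]
  refine Tendsto.sub ?_ (((tendsto_arg_perturb ha).add_const 0).div_const 2)
  refine tendsto_cang_aux (σ := if 0 ≤ b + c - a then 1 else -1)
    (Q := 4 * b * c - (b + c - a) ^ 2) (by positivity) ?_ ?_
    (fun δ hδ => wv_adj_im hb hc hδ) ?_
  · rw [mul_pow, mul_pow, Real.sq_sqrt ha.le, Real.sq_sqrt hc.le]; ring
  · split_ifs <;> norm_num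
  · have h := tendsto_csqrt (4 * b * c - (b + c - a) ^ 2) (b + c - a)
    have h2 : Tendsto (fun δ : ℝ => (a + δ * Complex.I + c - b : ℂ)) (𝓝[>] 0) (𝓝 (a + c - b)) := by
      have : Continuous (fun δ : ℝ => (a + δ * Complex.I + c - b : ℂ)) := by fun_prop
      have := this.tendsto 0
      simp at this
      exact this.mono_left nhdsWithin_le_nhds
    unfold wv
    have hs : ∀ δ : ℝ, heron b (a + δ * Complex.I) c = heron (a + δ * Complex.I) b c :=
      fun δ => heron_swap _ _ _
    simp only [hs, heron_perturb]
    convert h2.add (h.const_mul Complex.I) using 2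
    generalize (if 0 ≤ b + c - a then (1 : ℝ) else -1) = σ
    generalize √((|4 * b * c - (b + c - a) ^ 2| - (4 * b * c - (b + c - a) ^ 2)) / 2) = s
    generalize √((|4 * b * c - (b + c - a) ^ 2| + (4 * b * c - (b + c - a) ^ 2)) / 2) = s'
    push_cast
    linear_combination (-(σ : ℂ) * s) * Complex.I_sq

/-! ### Exactness of one-forms of complex angles -/

/-- A pointwise bounded limit of exact one-forms is exact, provided it is continuous. -/
lemma potential_limit {ι E : Type*} [NormedAddCommGroup E] [NormedSpace ℝ E] {l : Filter ι}
    [l.IsCountablyGenerated] [l.NeBot] {ω : ι → E → E →L[ℝ] ℝ} {ω₀ : E → E →L[ℝ] ℝ}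
    {f : ι → E → ℝ} (hf : ∀ᶠ n in l, ∀ u, HasFDerivAt (f n) (ω n u) u)
    (hc : ∀ᶠ n in l, Continuous (ω n)) (hb : ∀ v, ∃ C, ∀ᶠ n in l, ∀ u, |ω n u v| ≤ C)
    (hlim : ∀ u v, Tendsto (fun n => ω n u v) l (𝓝 (ω₀ u v))) (hc0 : Continuous ω₀) :
    ∃ F : E → ℝ, ∀ u, HasFDerivAt F (ω₀ u) u := by
  -- Differences of the primitives are integrals along segments, which converge by dominated
  -- convergence; the limits are therefore additive in the endpoints.
  have key : ∀ a b, Tendsto (fun n => f n b - f n a) l (𝓝 (∫ᶜ x in .segment a b, ω₀ x)) := by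
    intro a b
    rw [curveIntegral_segment]
    have hline : Continuous fun t : ℝ => AffineMap.lineMap (k := ℝ) a b t := by
      exact AffineMap.lineMap_continuous
    obtain ⟨C, hC⟩ := hb (b - a)
    have h1 : Tendsto (fun n => ∫ t in (0 : ℝ)..1, ω n (AffineMap.lineMap a b t) (b - a)) l
        (𝓝 (∫ t in (0 : ℝ)..1, ω₀ (AffineMap.lineMap a b t) (b - a))) := by
      refine intervalIntegral.tendsto_integral_filter_of_dominated_convergence (fun _ => C) ?_ ?_ ?_ ?_
      · filter_upwards [hc] with n hn
        exact (((hn.comp hline).clm_apply continuous_const)).aestronglyMeasurable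
      · filter_upwards [hC] with n hn
        exact Eventually.of_forall fun t _ => hn _
      · simp
      · exact Eventually.of_forall fun t _ => hlim _ _
    refine h1.congr' ?_
    filter_upwards [hf, hc] with n hn hcn
    have h2 : ∀ t ∈ Set.uIcc (0 : ℝ) 1, HasDerivAt (fun t => f n (AffineMap.lineMap a b t))
        (ω n (AffineMap.lineMap a b t) (b - a)) t := fun t _ =>
      (hn _).comp_hasDerivAt t AffineMap.hasDerivAt_lineMap
    rw [intervalIntegral.integral_eq_sub_of_hasDerivAt h2]
    · simp
    · exact ((hcn.comp hline).clm_apply continuous_const).intervalIntegrable _ _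
  refine ⟨fun u => ∫ᶜ x in .segment 0 u, ω₀ x, fun a => ?_⟩
  have h := (HasFDerivAt.curveIntegral_segment_source (a := a) hc0).const_add
    (∫ᶜ x in .segment 0 a, ω₀ x)
  refine h.congr_of_eventuallyEq (Eventually.of_forall fun b => ?_)
  refine tendsto_nhds_unique (key 0 b) (((key 0 a).add (key a b)).congr fun n => ?_)
  ring

/-- The one-form `θ_i du_i + θ_j du_j + θ_k du_k` of the complex angles of one triangle, where the
coordinates `u_i`, `u_j`, `u_k` are given as linear functionals. -/
noncomputable def om {E : Type*} [NormedAddCommGroup E] [NormedSpace ℝ E] (A B C : ℂ)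
    (p q s : E →L[ℝ] ℝ) (u : E) : E →L[ℝ] ℝ :=
  angT A B C (p u) (q u) (s u) • p + angT B A C (q u) (p u) (s u) • q +
    angT C A B (s u) (p u) (q u) • s

/-- All three angles of the triangle with logarithmic radii `x`, `y`, `z` are smooth. -/
structure Good3 (A B C : ℂ) (x y z : ℝ) : Prop where
  h1 : Good (sqc y z A) (sqc x z B) (sqc x y C)
  h2 : Good (sqc x z B) (sqc y z A) (sqc y x C)
  h3 : Good (sqc x y C) (sqc z y A) (sqc z x B)

lemma contDiffAt_angT {E : Type*} [NormedAddCommGroup E] [NormedSpace ℝ E] {n : WithTop ℕ∞}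
    {A B C : ℂ} (p q s : E →L[ℝ] ℝ) {u : E}
    (hg : Good (sqc (q u) (s u) A) (sqc (p u) (s u) B) (sqc (p u) (q u) C)) :
    ContDiffAt ℝ n (fun u => angT A B C (p u) (q u) (s u)) u :=
  contDiffAt_cang (contDiff_sqc q.contDiff s.contDiff A).contDiffAt
    (contDiff_sqc p.contDiff s.contDiff B).contDiffAt
    (contDiff_sqc p.contDiff q.contDiff C).contDiffAt hg

lemma contDiffAt_om {E : Type*} [NormedAddCommGroup E] [NormedSpace ℝ E] {n : WithTop ℕ∞}
    {A B C : ℂ} (p q s : E →L[ℝ] ℝ) {u : E} (hg : Good3 A B C (p u) (q u) (s u)) :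
    ContDiffAt ℝ n (om A B C p q s) u :=
  (((contDiffAt_angT p q s hg.h1).smul contDiffAt_const).add
    ((contDiffAt_angT q p s hg.h2).smul contDiffAt_const)).add
    ((contDiffAt_angT s p q (by simpa only [sqc_comm] using hg.h3)).smul contDiffAt_const)

/-- The symmetric bilinear form which is minus the derivative of the one-form `om`, as long as the
angles are smooth. -/
noncomputable def qf (A B C : ℂ) (x y z : ℝ) (v1 v2 v3 w1 w2 w3 : ℝ) : ℝ :=
  (2 * (cf A B C x y z * ((v1 - v2) * (w1 - w2)) + cf A C B x z y * ((v1 - v3) * (w1 - w3)) +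
    cf B C A y z x * ((v2 - v3) * (w2 - w3))) /
      (heron (sqc y z A) (sqc x z B) (sqc x y C)).sqrt).re

lemma qf_symm (A B C : ℂ) (x y z : ℝ) (v1 v2 v3 w1 w2 w3 : ℝ) :
    qf A B C x y z v1 v2 v3 w1 w2 w3 = qf A B C x y z w1 w2 w3 v1 v2 v3 := by
  unfold qf; congr 2; ring

lemma hasDerivAt_om (A B C : ℂ) {x y z : ℝ → ℝ} {v1 v2 v3 w1 w2 w3 : ℝ} {t : ℝ}
    (hx : HasDerivAt x v1 t) (hy : HasDerivAt y v2 t) (hz : HasDerivAt z v3 t)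
    (hg : Good3 A B C (x t) (y t) (z t)) :
    HasDerivAt (fun t => angT A B C (x t) (y t) (z t) * w1 + angT B A C (y t) (x t) (z t) * w2 +
      angT C A B (z t) (x t) (y t) * w3)
      (-qf A B C (x t) (y t) (z t) v1 v2 v3 w1 w2 w3) t := by
  have h1 := (hasDerivAt_angT A B C hx hy hz hg.h1).mul_const w1
  have h2 := (hasDerivAt_angT B A C hy hx hz hg.h2).mul_const w2
  have h3 := (hasDerivAt_angT C A B hz hx hy
    (by simpa only [sqc_comm] using hg.h3)).mul_const w3
  refine ((h1.add h2).add h3).congr_deriv ?_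
  unfold qf
  have e : ∀ (z : ℂ) (r : ℝ), z.re * r = (z * r).re := by intro z r; simp
  rw [e, e, e, ← Complex.add_re, ← Complex.add_re, ← Complex.neg_re]
  rw [sqc_comm (y t) (x t), sqc_comm (z t) (x t), sqc_comm (z t) (y t),
    heron_swap (sqc (y t) (z t) A), heron_rot (sqc (y t) (z t) A) (sqc (x t) (z t) B),
    cf_comm B A, cf_comm C A B, cf_comm C B A]
  congr 1
  ring

/-- The angle one-form is closed by the symmetry of `qf`, and hence exact by the Poincaré lemma, when
the angles are smooth everywhere. -/
lemma exists_potential_of_good {E : Type*} [NormedAddCommGroup E] [NormedSpace ℝ E]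
    (A B C : ℂ) (p q s : E →L[ℝ] ℝ) (hg : ∀ u, Good3 A B C (p u) (q u) (s u)) :
    ∃ f : E → ℝ, ∀ u, HasFDerivAt f (om A B C p q s u) u := by
  have hd : ∀ u, DifferentiableAt ℝ (om A B C p q s) u := fun u =>
    (contDiffAt_om (n := 1) p q s (hg u)).differentiableAt (by simp)
  have hform : ∀ u v w, fderiv ℝ (om A B C p q s) u v w =
      -qf A B C (p u) (q u) (s u) (p v) (q v) (s v) (p w) (q w) (s w) := by
    intro u v w
    have hl : HasDerivAt (fun t : ℝ => u + t • v) v 0 := by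
      simpa using ((hasDerivAt_id (0 : ℝ)).smul_const v).const_add u
    have hd' := (hd u).hasFDerivAt
    have e0 : u = u + (0 : ℝ) • v := by simp
    have h1 : HasDerivAt (fun t : ℝ => om A B C p q s (u + t • v) w)
        (fderiv ℝ (om A B C p q s) u v w) 0 := by
      have := HasFDerivAt.comp_hasDerivAt (f := fun t : ℝ => u + t • v) 0
        (l := om A B C p q s) (by rw [← e0]; exact hd') hl
      simpa using this.clm_apply (hasDerivAt_const 0 w)
    have hp : ∀ p : E →L[ℝ] ℝ, HasDerivAt (fun t : ℝ => p (u + t • v)) (p v) 0 := fun p =>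
      p.hasFDerivAt.comp_hasDerivAt 0 hl
    have h2 := hasDerivAt_om A B C (w1 := p w) (w2 := q w) (w3 := s w) (hp p) (hp q) (hp s)
      (by rw [← e0]; exact hg u)
    rw [← e0] at h2
    refine h1.unique h2
  obtain ⟨f, hf⟩ := convex_univ.exists_forall_hasFDerivAt_of_fderiv_symmetric isOpen_univ
    (fun u _ => (hd u).differentiableWithinAt) (fun u _ v w => by
      rw [hform, hform, qf_symm])
  exact ⟨f, fun u => hf u trivial⟩

/-! ### Generalized angles and the potential of a face -/

/-- The squared length `e^{2p} + e^{2q} + 2 J e^{p+q}`. -/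
noncomputable def sq (p q J : ℝ) : ℝ :=
  Real.exp p ^ 2 + Real.exp q ^ 2 + 2 * Real.exp p * Real.exp q * J

lemma sq_pos {p q J : ℝ} (hJ : 0 ≤ J) : 0 < sq p q J := by unfold sq; positivity

lemma sq_comm (p q J : ℝ) : sq p q J = sq q p J := by unfold sq; ring

lemma sqc_ofReal (p q J : ℝ) : sqc p q (J : ℂ) = (sq p q J : ℂ) := by
  unfold sqc sq; push_cast; ring

lemma sqc_perturb (p q J ε : ℝ) : sqc p q (J + ε * Complex.I) =
    (sq p q J : ℂ) + ((2 * Real.exp p * Real.exp q * ε : ℝ) : ℂ) * Complex.I := by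
  unfold sqc sq; push_cast; ring

/-- The generalized angle at the vertex with logarithmic radius `x`. -/
noncomputable def th (A B C x y z : ℝ) : ℝ := rang (sq y z A) (sq x z B) (sq x y C)

/-- The one-form `θ_i du_i + θ_j du_j + θ_k du_k` of the generalized angles of one triangle. -/
noncomputable def omr {E : Type*} [NormedAddCommGroup E] [NormedSpace ℝ E] (A B C : ℝ)
    (p q s : E →L[ℝ] ℝ) (u : E) : E →L[ℝ] ℝ :=
  th A B C (p u) (q u) (s u) • p + th B A C (q u) (p u) (s u) • q +
    th C A B (s u) (p u) (q u) • s

/-- Moving one weight off the real line makes all three angles smooth, for arbitrary radii. -/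
lemma good3_perturb {A B C ε : ℝ} (hA : 0 ≤ A) (hB : 0 ≤ B) (hC : 0 ≤ C) (hε : 0 < ε) (x y z : ℝ) :
    Good3 (A + ε * Complex.I) B C x y z where
  h1 := by
    rw [sqc_perturb, sqc_ofReal, sqc_ofReal]
    exact good_opp (sq_pos hB) (sq_pos hC) (by positivity)
  h2 := by
    rw [sqc_perturb, sqc_ofReal, sqc_ofReal]
    exact good_adj (sq_pos hA) (sq_pos hB) (sq_pos hC) (by positivity)
  h3 := by
    rw [sqc_perturb, sqc_ofReal, sqc_ofReal]
    exact good_adj (sq_pos hA) (sq_pos hC) (sq_pos hB) (by positivity)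

lemma abs_cang_le (a b c : ℂ) : |cang a b c| ≤ 2 * π := by
  unfold cang
  have h1 := abs_le.1 (Complex.abs_arg_le_pi (wv a b c))
  have h2 := abs_le.1 (Complex.abs_arg_le_pi b)
  have h3 := abs_le.1 (Complex.abs_arg_le_pi c)
  rw [abs_le]
  constructor <;> linarith

lemma rang_comm (a b c : ℝ) : rang a b c = rang a c b := by
  unfold rang; congr 1; ring

lemma th_comm (A B C x y z : ℝ) : th A B C x y z = th A C B x z y := by
  unfold th; rw [rang_comm, sq_comm y z]

lemma continuous_th {E : Type*} [TopologicalSpace E] {A B C : ℝ} (hB : 0 ≤ B) (hC : 0 ≤ C)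
    {x y z : E → ℝ} (hx : Continuous x) (hy : Continuous y) (hz : Continuous z) :
    Continuous fun u => th A B C (x u) (y u) (z u) := by
  unfold th rang
  refine Real.continuous_arccos.comp (Continuous.div ?_ ?_ fun u => ?_)
  · unfold sq; fun_prop
  · unfold sq; fun_prop
  · have h1 := Real.sqrt_pos.2 (sq_pos (p := x u) (q := z u) hB)
    have h2 := Real.sqrt_pos.2 (sq_pos (p := x u) (q := y u) hC)
    positivity

lemma tendsto_delta (x y : ℝ) :
    Tendsto (fun ε : ℝ => 2 * Real.exp x * Real.exp y * ε) (𝓝[>] 0) (𝓝[>] 0) := by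
  refine tendsto_nhdsWithin_iff.2 ⟨?_, ?_⟩
  · have : Continuous (fun ε : ℝ => 2 * Real.exp x * Real.exp y * ε) := by fun_prop
    have := this.tendsto 0
    rw [mul_zero] at this
    exact this.mono_left nhdsWithin_le_nhds
  · filter_upwards [self_mem_nhdsWithin] with ε hε
    have : 0 < ε := hε
    exact Set.mem_Ioi.2 (by positivity)

lemma tendsto_angT_opp {A B C : ℝ} (hB : 0 ≤ B) (hC : 0 ≤ C) (x y z : ℝ) :
    Tendsto (fun ε : ℝ => angT (A + ε * Complex.I) B C x y z) (𝓝[>] 0) (𝓝 (th A B C x y z)) := by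
  unfold angT th
  simp only [sqc_perturb, sqc_ofReal]
  exact (tendsto_cang_opp (sq_pos hB) (sq_pos hC)).comp (tendsto_delta y z)

lemma tendsto_angT_adj {A B C : ℝ} (hA : 0 ≤ A) (hB : 0 ≤ B) (hC : 0 ≤ C) (x y z : ℝ) :
    Tendsto (fun ε : ℝ => angT B (A + ε * Complex.I) C x y z) (𝓝[>] 0) (𝓝 (th B A C x y z)) := by
  unfold angT th
  simp only [sqc_perturb, sqc_ofReal]
  exact (tendsto_cang_adj (sq_pos hA) (sq_pos hB) (sq_pos hC)).comp (tendsto_delta x z)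

/-- The one-form of the generalized angles of a triangle is exact on the whole space, since it is
the limit of the exact one-forms with one weight moved off the real line. -/
lemma exists_face_potential {E : Type*} [NormedAddCommGroup E] [NormedSpace ℝ E]
    {A B C : ℝ} (hA : 0 ≤ A) (hB : 0 ≤ B) (hC : 0 ≤ C) (p q s : E →L[ℝ] ℝ) :
    ∃ f : E → ℝ, ∀ u, HasFDerivAt f (omr A B C p q s u) u := by
  have hg : ∀ ε > (0 : ℝ), ∀ u, Good3 (A + ε * Complex.I) B C (p u) (q u) (s u) :=
    fun ε hε u => good3_perturb hA hB hC hε _ _ _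
  have hex : ∀ ε : ℝ, ∃ f : E → ℝ, 0 < ε → ∀ u,
      HasFDerivAt f (om (A + ε * Complex.I) B C p q s u) u := by
    intro ε
    by_cases hε : 0 < ε
    · obtain ⟨f, hf⟩ := exists_potential_of_good _ _ _ p q s (hg ε hε)
      exact ⟨f, fun _ => hf⟩
    · exact ⟨0, fun h => absurd h hε⟩
  choose f hf using hex
  refine potential_limit (l := 𝓝[>] (0 : ℝ)) (f := f)
    (ω := fun ε => om (A + ε * Complex.I) B C p q s) ?_ ?_ ?_ ?_ ?_
  · filter_upwards [self_mem_nhdsWithin] with ε hε using hf ε hε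
  · filter_upwards [self_mem_nhdsWithin] with ε hε
    exact continuous_iff_continuousAt.2 fun u =>
      (contDiffAt_om (n := 0) p q s (hg ε hε u)).continuousAt
  · refine fun v => ⟨2 * π * (|p v| + |q v| + |s v|), Eventually.of_forall fun ε u => ?_⟩
    simp only [om, add_apply, smul_apply, smul_eq_mul]
    refine (abs_add_three _ _ _).trans ?_
    simp only [abs_mul, mul_add]
    gcongr <;> exact abs_cang_le _ _ _
  · intro u v
    simp only [om, omr, add_apply, smul_apply, smul_eq_mul]
    have h3 : Tendsto (fun ε : ℝ => angT C (A + ε * Complex.I) B (s u) (p u) (q u)) (𝓝[>] 0)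
        (𝓝 (th C A B (s u) (p u) (q u))) := tendsto_angT_adj hA hC hB _ _ _
    exact (((tendsto_angT_opp hB hC _ _ _).mul_const _).add
      ((tendsto_angT_adj hA hB hC _ _ _).mul_const _)).add (h3.mul_const _)
  · unfold omr
    have hp := p.continuous
    have hq := q.continuous
    have hs := s.continuous
    have c1 := continuous_th (A := A) hB hC hp hq hs
    have c2 := continuous_th (A := B) hA hC hq hp hs
    have c3 := continuous_th (A := C) hA hB hs hp hq
    fun_prop

/-! ### Definiteness of the angle derivative -/

/-- A quadratic form `α d² + β (d + e)² + γ e²` is positive definite if its determinant is positive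
and one of its values at `(1, 0)`, `(0, 1)` and `(1, -1)` is. -/
lemma quad_pos {α β γ d e : ℝ} (hS : 0 < α + β ∨ 0 < α + γ ∨ 0 < β + γ)
    (hD : 0 < α * β + α * γ + β * γ) :
    0 ≤ α * d ^ 2 + β * (d + e) ^ 2 + γ * e ^ 2 ∧
      (α * d ^ 2 + β * (d + e) ^ 2 + γ * e ^ 2 = 0 → d = 0 ∧ e = 0) := by
  have hS1 : 0 < α + β := by
    rcases hS with h | h | h
    · exact h
    · have : 0 < (α + β) * (α + γ) := by nlinarith [sq_nonneg α]
      exact pos_of_mul_pos_left this h.le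
    · have : 0 < (α + β) * (β + γ) := by nlinarith [sq_nonneg β]
      exact pos_of_mul_pos_left this h.le
  have key : (α + β) * (α * d ^ 2 + β * (d + e) ^ 2 + γ * e ^ 2) =
      ((α + β) * d + β * e) ^ 2 + (α * β + α * γ + β * γ) * e ^ 2 := by ring
  constructor
  · refine nonneg_of_mul_nonneg_right (a := α + β) ?_ hS1
    rw [key]; positivity
  · intro h
    rw [h, mul_zero] at key
    have h1 : (α * β + α * γ + β * γ) * e ^ 2 = 0 := by
      have : 0 ≤ (α * β + α * γ + β * γ) * e ^ 2 := by positivity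
      nlinarith [sq_nonneg ((α + β) * d + β * e)]
    have he : e = 0 := by
      rcases mul_eq_zero.1 h1 with h | h
      · exact absurd h hD.ne'
      · exact pow_eq_zero_iff (two_ne_zero) |>.1 h
    subst he
    refine ⟨?_, rfl⟩
    have h2 : ((α + β) * d) ^ 2 = 0 := by nlinarith
    rcases mul_eq_zero.1 (pow_eq_zero_iff (two_ne_zero) |>.1 h2) with h | h
    · exact absurd h hS1.ne'
    · exact h

/-- Heron's polynomial of the triangle with logarithmic radii `x`, `y`, `z`; it is `16·(area)²` for a
nondegenerate triangle, and nonpositive when a strict triangle inequality fails. -/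
noncomputable def disc (A B C x y z : ℝ) : ℝ :=
  4 * sq x z B * sq x y C - (sq x z B + sq x y C - sq y z A) ^ 2

lemma qf_real {A B C x y z : ℝ} (h : 0 < disc A B C x y z) (v1 v2 v3 w1 w2 w3 : ℝ) :
    qf A B C x y z v1 v2 v3 w1 w2 w3 =
      2 / √(disc A B C x y z) *
      (nh (Real.exp x) (Real.exp y) (Real.exp z) A B C / sq x y C * ((v1 - v2) * (w1 - w2)) +
       nh (Real.exp x) (Real.exp z) (Real.exp y) A C B / sq x z B * ((v1 - v3) * (w1 - w3)) +
       nh (Real.exp y) (Real.exp z) (Real.exp x) B C A / sq y z A * ((v2 - v3) * (w2 - w3))) := by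
  unfold qf cf
  rw [sqc_ofReal, sqc_ofReal, sqc_ofReal, heron_real]
  change (_ / (((disc A B C x y z : ℝ) : ℂ)).sqrt).re = _
  rw [csqrt_ofReal h.le]
  have e : ∀ P Q R A B C : ℝ, nh (P : ℂ) Q R A B C = ((nh P Q R A B C : ℝ) : ℂ) := by
    intro P Q R A B C; unfold nh; push_cast; rfl
  rw [e, e, e]
  rw [← Complex.ofReal_re (2 / √(disc A B C x y z) * _)]
  congr 1
  push_cast
  ring

/-- In a nondegenerate triangle, the derivative of the angles is negative definite modulo the
scaling direction. The nonnegativity of the weights makes the coefficients of the identities for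
the discriminant (`hdet`) and for the pairwise sums (`hxy`, `hyz`, `hzx`) positive. -/
lemma qf_pos {A B C x y z : ℝ} (hA : 0 ≤ A) (hB : 0 ≤ B) (hC : 0 ≤ C)
    (h : 0 < disc A B C x y z) (v1 v2 v3 : ℝ) :
    0 ≤ qf A B C x y z v1 v2 v3 v1 v2 v3 ∧
      (qf A B C x y z v1 v2 v3 v1 v2 v3 = 0 → v1 = v2 ∧ v2 = v3) := by
  rw [qf_real h]
  have ha := sq_pos (p := y) (q := z) hA
  have hb := sq_pos (p := x) (q := z) hB
  have hc := sq_pos (p := x) (q := y) hC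
  have hk : 0 < 2 / √(disc A B C x y z) := by have := Real.sqrt_pos.2 h; positivity
  have hp := Real.exp_pos x
  have hq := Real.exp_pos y
  have hr := Real.exp_pos z
  unfold disc sq at *
  set P := Real.exp x
  set Q := Real.exp y
  set R := Real.exp z
  clear_value P Q R
  set a := Q ^ 2 + R ^ 2 + 2 * Q * R * A with haa
  set b := P ^ 2 + R ^ 2 + 2 * P * R * B with hbb
  set c := P ^ 2 + Q ^ 2 + 2 * P * Q * C with hcc
  set nc := nh P Q R A B C with hnc
  set nb := nh P R Q A C B with hnb
  set na := nh Q R P B C A with hna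
  have hdet : 0 < nc / c * (nb / b) + nc / c * (na / a) + nb / b * (na / a) := by
    have e : nc / c * (nb / b) + nc / c * (na / a) + nb / b * (na / a) =
        (a * nb * nc + b * na * nc + c * na * nb) / (a * b * c) := by field_simp
    have e2 : a * nb * nc + b * na * nc + c * na * nb = (4 * b * c - (b + c - a) ^ 2) / 4 *
        ((P ^ 2 + C * P * Q) * (Q ^ 2 + A * Q * R) * (R ^ 2 + B * P * R) +
         (Q ^ 2 + C * P * Q) * (R ^ 2 + A * Q * R) * (P ^ 2 + B * P * R)) := by
      rw [hnc, hnb, hna, haa, hbb, hcc]; unfold nh; ring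
    rw [e, e2]
    positivity
  have hxy : 2 * (nc / c + nb / b) = (P ^ 2 + B * P * R) * (a + b - c) / b +
      (P ^ 2 + C * P * Q) * (a + c - b) / c := by
    field_simp
    rw [hnc, hnb, haa, hbb, hcc]; unfold nh; ring
  have hyz : 2 * (nc / c + na / a) = (Q ^ 2 + A * Q * R) * (a + b - c) / a +
      (Q ^ 2 + C * P * Q) * (b + c - a) / c := by
    field_simp
    rw [hnc, hna, haa, hbb, hcc]; unfold nh; ring
  have hzx : 2 * (nb / b + na / a) = (R ^ 2 + A * Q * R) * (a + c - b) / a +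
      (R ^ 2 + B * P * R) * (b + c - a) / b := by
    field_simp
    rw [hnb, hna, haa, hbb, hcc]; unfold nh; ring
  have aux : ∀ {m n s t b c : ℝ}, 0 < m → 0 < n → 0 ≤ s → 0 ≤ t → 0 < s + t → 0 < b → 0 < c →
      0 < m * s / b + n * t / c := by
    intro m n s t b c hm hn hs ht hst hb hc
    rcases hs.eq_or_lt with h | h
    · have : 0 < t := by linarith
      positivity
    · positivity
  -- At most one of `b + c - a`, `a + c - b`, `a + b - c` is negative, so one of the pairwise sums
  -- has nonnegative terms.
  have hsum : 0 < nc / c + nb / b ∨ 0 < nc / c + na / a ∨ 0 < nb / b + na / a := by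
    rcases lt_or_ge (b + c - a) 0 with h1 | h1
    · left
      have := aux (m := P ^ 2 + B * P * R) (n := P ^ 2 + C * P * Q) (s := a + b - c)
        (t := a + c - b) (by positivity) (by positivity) (by linarith) (by linarith)
        (by linarith) hb hc
      linarith
    · rcases lt_or_ge (a + c - b) 0 with h2 | h2
      · right; left
        have := aux (m := Q ^ 2 + A * Q * R) (n := Q ^ 2 + C * P * Q) (s := a + b - c)
          (t := b + c - a) (by positivity) (by positivity) (by linarith) (by linarith)
          (by linarith) ha hc
        linarith
      · right; right
        have := aux (m := R ^ 2 + A * Q * R) (n := R ^ 2 + B * P * R) (s := a + c - b)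
          (t := b + c - a) (by positivity) (by positivity) (by linarith) (by linarith)
          (by linarith) ha hb
        linarith
  obtain ⟨k1, k2⟩ := quad_pos (d := v1 - v2) (e := v2 - v3) hsum hdet
  have e3 : ∀ α β γ : ℝ, α * ((v1 - v2) * (v1 - v2)) + β * ((v1 - v3) * (v1 - v3)) +
      γ * ((v2 - v3) * (v2 - v3)) = α * (v1 - v2) ^ 2 + β * (v1 - v2 + (v2 - v3)) ^ 2 +
        γ * (v2 - v3) ^ 2 := by intros; ring
  rw [e3]
  refine ⟨mul_nonneg hk.le k1, fun h0 => ?_⟩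
  obtain ⟨k3, k4⟩ := k2 ((mul_eq_zero.1 h0).resolve_left hk.ne')
  exact ⟨by linarith, by linarith⟩

/-- A continuous function which has a nonnegative derivative except where it takes finitely many
values is monotone. -/
lemma monotone_of_deriv_or_mem {h : ℝ → ℝ} (hc : Continuous h) {S : Set ℝ} (hS : S.Finite)
    (hd : ∀ t, (∃ h', HasDerivAt h h' t ∧ 0 ≤ h') ∨ h t ∈ S) : Monotone h := by
  intro s t hst
  by_contra! hlt
  have hinf : (Set.Ioo (h t) (h s) \ S).Nonempty :=
    ((Set.Ioo_infinite hlt).sdiff hS).nonempty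
  -- If `h t < h s`, then `h` has to descend through an interval `[m, c]` of values outside `S`, where
  -- its derivative is nonnegative.
  obtain ⟨c, ⟨hc1, hc2⟩, hcS⟩ := hinf
  have hnb : Sᶜ ∩ Set.Ioo (h t) (h s) ∈ 𝓝 c :=
    inter_mem (hS.isClosed.isOpen_compl.mem_nhds hcS) (Ioo_mem_nhds hc1 hc2)
  obtain ⟨l, hl, hlS⟩ := exists_Ioc_subset_of_mem_nhds hnb ⟨h t, hc1⟩
  obtain ⟨m, hm1, hm2⟩ := exists_between hl
  have hmem := hlS ⟨hm1, hm2.le⟩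
  obtain ⟨t1, ⟨⟨ht1a, ht1b⟩, ht1c⟩, ht1⟩ :=
    (isCompact_Icc (a := s) (b := t)).inter_right (isClosed_le continuous_const hc) |>.exists_isGreatest
      (show (Set.Icc s t ∩ {r | c ≤ h r}).Nonempty from ⟨s, ⟨le_rfl, hst⟩, hc2.le⟩)
  obtain ⟨t2, ⟨⟨ht2a, ht2b⟩, ht2c⟩, ht2⟩ :=
    (isCompact_Icc (a := t1) (b := t)).inter_right (isClosed_le hc continuous_const) |>.exists_isLeast
      (show (Set.Icc t1 t ∩ {r | h r ≤ m}).Nonempty from ⟨t, ⟨ht1b, le_rfl⟩, hmem.2.1.le⟩)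
  have hder : ∀ r ∈ Set.Ioo t1 t2, ∃ h', HasDerivAt h h' r ∧ 0 ≤ h' := by
    intro r hr
    refine (hd r).resolve_right fun hrS => ?_
    have h1 : h r < c := by
      by_contra! h2
      have := ht1 (show r ∈ _ from ⟨⟨ht1a.trans hr.1.le, hr.2.le.trans ht2b⟩, h2⟩)
      exact absurd hr.1 (not_lt.2 this)
    have h2 : m < h r := by
      by_contra! h2
      have := ht2 (show r ∈ _ from ⟨⟨hr.1.le, hr.2.le.trans ht2b⟩, h2⟩)
      exact absurd hr.2 (not_lt.2 this)
    exact (hlS ⟨hm1.trans h2, h1.le⟩).1 hrS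
  have hmono : MonotoneOn h (Set.Icc t1 t2) := by
    refine monotoneOn_of_deriv_nonneg (convex_Icc _ _) hc.continuousOn ?_ ?_
    · intro r hr
      rw [interior_Icc] at hr
      obtain ⟨_, h1, _⟩ := hder r hr
      exact h1.differentiableAt.differentiableWithinAt
    · intro r hr
      rw [interior_Icc] at hr
      obtain ⟨_, h1, h2⟩ := hder r hr
      rwa [h1.deriv]
  have := hmono ⟨le_rfl, ht2a⟩ ⟨ht2a, le_rfl⟩ ht2a
  simp only [Set.mem_ofPred_eq] at ht1c ht2c
  linarith

/-! ### Generalized angles: smoothness, monotonicity and sum -/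

lemma disc_swap (A B C x y z : ℝ) : disc B A C y x z = disc A B C x y z := by
  unfold disc sq; ring

lemma disc_rot (A B C x y z : ℝ) : disc C A B z x y = disc A B C x y z := by
  unfold disc sq; ring

lemma good3_real {A B C x y z : ℝ} (hA : 0 ≤ A) (hB : 0 ≤ B) (hC : 0 ≤ C)
    (h : 0 < disc A B C x y z) : Good3 A B C x y z where
  h1 := by
    rw [sqc_ofReal, sqc_ofReal, sqc_ofReal]
    exact good_real (sq_pos hB) (sq_pos hC) h
  h2 := by
    rw [sqc_ofReal, sqc_ofReal, sqc_ofReal]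
    exact good_real (sq_pos hA) (sq_pos hC) (by rwa [← disc_swap] at h)
  h3 := by
    rw [sqc_ofReal, sqc_ofReal, sqc_ofReal, sq_comm z y, sq_comm z x]
    refine good_real (sq_pos hA) (sq_pos hB) ?_
    unfold disc at h
    linarith

lemma angT_real {A B C x y z : ℝ} (hB : 0 ≤ B) (hC : 0 ≤ C)
    (h : 0 < disc A B C x y z) : angT A B C x y z = th A B C x y z := by
  unfold angT th
  rw [sqc_ofReal, sqc_ofReal, sqc_ofReal]
  exact cang_real (sq_pos hB) (sq_pos hC) h

/-- The generalized angles of a degenerate triangle are `0` or `π`. -/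
lemma th_mem_of_disc {A B C x y z : ℝ} (hB : 0 ≤ B) (hC : 0 ≤ C)
    (h : disc A B C x y z ≤ 0) : th A B C x y z ∈ ({0, π} : Set ℝ) := by
  unfold th rang
  unfold disc at h
  have hb := sq_pos (p := x) (q := z) hB
  have hc := sq_pos (p := x) (q := y) hC
  set a := sq y z A
  set b := sq x z B
  set c := sq x y C
  have hb' := Real.sqrt_pos.2 hb
  have hc' := Real.sqrt_pos.2 hc
  have hk : 0 < 2 * √b * √c := by positivity
  have h2 : (2 * √b * √c) ^ 2 ≤ (b + c - a) ^ 2 := by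
    rw [mul_pow, mul_pow, Real.sq_sqrt hb.le, Real.sq_sqrt hc.le]; linarith
  have h3 := sq_le_sq.1 h2
  rw [abs_of_pos hk] at h3
  rcases le_or_gt 0 (b + c - a) with h4 | h4
  · left
    rw [abs_of_nonneg h4] at h3
    rw [Real.arccos_eq_zero, one_le_div hk]
    exact h3
  · right
    rw [abs_of_neg h4] at h3
    rw [Set.mem_singleton_iff, Real.arccos_eq_pi, div_le_iff₀ hk]
    linarith

section Face

variable {E : Type*} [NormedAddCommGroup E] [NormedSpace ℝ E] {A B C : ℝ}

lemma continuous_disc {X : Type*} [TopologicalSpace X] {x y z : X → ℝ}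
    (hx : Continuous x) (hy : Continuous y) (hz : Continuous z) :
    Continuous fun u => disc A B C (x u) (y u) (z u) := by
  unfold disc sq; fun_prop

lemma contDiffAt_th {n : WithTop ℕ∞} (hA : 0 ≤ A) (hB : 0 ≤ B) (hC : 0 ≤ C) (p q s : E →L[ℝ] ℝ)
    {u : E} (h : 0 < disc A B C (p u) (q u) (s u)) :
    ContDiffAt ℝ n (fun u => th A B C (p u) (q u) (s u)) u := by
  refine (contDiffAt_angT p q s (good3_real hA hB hC h).h1).congr_of_eventuallyEq ?_
  have : ∀ᶠ v in 𝓝 u, 0 < disc A B C (p v) (q v) (s v) :=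
    (continuous_disc p.continuous q.continuous s.continuous).continuousAt.eventually_const_lt h
  filter_upwards [this] with v hv
  exact (angT_real hB hC hv).symm

lemma hasDerivAt_omr (hA : 0 ≤ A) (hB : 0 ≤ B) (hC : 0 ≤ C) (p q s : E →L[ℝ] ℝ)
    {u v : E} (w : E) {t : ℝ} (h : 0 < disc A B C (p (u + t • v)) (q (u + t • v)) (s (u + t • v))) :
    HasDerivAt (fun t : ℝ => omr A B C p q s (u + t • v) w)
      (-qf A B C (p (u + t • v)) (q (u + t • v)) (s (u + t • v)) (p v) (q v) (s v)
        (p w) (q w) (s w)) t := by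
  have hl : HasDerivAt (fun t : ℝ => u + t • v) v t := by
    simpa using ((hasDerivAt_id t).smul_const v).const_add u
  have hp : ∀ p : E →L[ℝ] ℝ, HasDerivAt (fun t : ℝ => p (u + t • v)) (p v) t := fun p =>
    p.hasFDerivAt.comp_hasDerivAt t hl
  refine (hasDerivAt_om A B C (w1 := p w) (w2 := q w) (w3 := s w) (hp p) (hp q) (hp s)
    (good3_real hA hB hC h)).congr_of_eventuallyEq ?_
  have hcl : ∀ p : E →L[ℝ] ℝ, Continuous fun t : ℝ => p (u + t • v) := fun p => by fun_prop
  have : ∀ᶠ r in 𝓝 t, 0 < disc A B C (p (u + r • v)) (q (u + r • v)) (s (u + r • v)) :=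
    (continuous_disc (hcl p) (hcl q) (hcl s)).continuousAt.eventually_const_lt h
  filter_upwards [this] with r hr
  rw [angT_real hB hC hr, angT_real hA hC (by rwa [disc_swap]),
    angT_real hA hB (by rwa [disc_rot])]
  rfl

lemma continuous_omr (hA : 0 ≤ A) (hB : 0 ≤ B) (hC : 0 ≤ C) (p q s : E →L[ℝ] ℝ) :
    Continuous (omr A B C p q s) := by
  unfold omr
  have hp := p.continuous
  have hq := q.continuous
  have hs := s.continuous
  have c1 := continuous_th (A := A) hB hC hp hq hs
  have c2 := continuous_th (A := B) hA hC hq hp hs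
  have c3 := continuous_th (A := C) hA hB hs hp hq
  fun_prop

/-- The potential of the angles of a triangle is concave: along a line, the derivative is
nonpositive for nondegenerate triangles, and degenerate triangles have angles `0` or `π`. -/
lemma monotone_neg_omr (hA : 0 ≤ A) (hB : 0 ≤ B) (hC : 0 ≤ C) (p q s : E →L[ℝ] ℝ) (u v : E) :
    Monotone fun t : ℝ => -omr A B C p q s (u + t • v) v := by
  have hfin : (({0, π} : Set ℝ) ×ˢ (({0, π} : Set ℝ) ×ˢ ({0, π} : Set ℝ))).Finite :=
    (Set.toFinite _).prod ((Set.toFinite _).prod (Set.toFinite _))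
  refine monotone_of_deriv_or_mem (S := (fun a : ℝ × ℝ × ℝ =>
    -(a.1 * p v + a.2.1 * q v + a.2.2 * s v)) '' _) ?_ (hfin.image _) fun t => ?_
  · have := continuous_omr hA hB hC p q s
    fun_prop
  · rcases lt_or_ge 0 (disc A B C (p (u + t • v)) (q (u + t • v)) (s (u + t • v))) with h | h
    · left
      refine ⟨_, (hasDerivAt_omr hA hB hC p q s v h).neg, ?_⟩
      rw [neg_neg]
      exact (qf_pos hA hB hC h _ _ _).1
    · right
      refine ⟨(_, _, _), ⟨th_mem_of_disc hB hC h, th_mem_of_disc hA hC (by rwa [disc_swap]),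
        th_mem_of_disc hA hB (by rwa [disc_rot])⟩, rfl⟩

end Face

/-- A degenerate triangle with longest side `s` has angles `0`, `0` and `π`. -/
lemma rang_flat {p q s : ℝ} (hp : 0 < p) (hq : 0 < q) (hs : 0 < s) (h : p + q ≤ s) :
    rang (p ^ 2) (q ^ 2) (s ^ 2) + rang (q ^ 2) (p ^ 2) (s ^ 2) + rang (s ^ 2) (p ^ 2) (q ^ 2)
      = π := by
  unfold rang
  rw [Real.sqrt_sq hp.le, Real.sqrt_sq hq.le, Real.sqrt_sq hs.le]
  have h1 : Real.arccos ((q ^ 2 + s ^ 2 - p ^ 2) / (2 * q * s)) = 0 := by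
    rw [Real.arccos_eq_zero, one_le_div (by positivity)]
    nlinarith
  have h2 : Real.arccos ((p ^ 2 + s ^ 2 - q ^ 2) / (2 * p * s)) = 0 := by
    rw [Real.arccos_eq_zero, one_le_div (by positivity)]
    nlinarith
  have h3 : Real.arccos ((p ^ 2 + q ^ 2 - s ^ 2) / (2 * p * q)) = π := by
    rw [Real.arccos_eq_pi, div_le_iff₀ (by positivity)]
    nlinarith
  rw [h1, h2, h3]; ring

lemma rang_sum {p q s : ℝ} (hp : 0 < p) (hq : 0 < q) (hs : 0 < s) :
    rang (p ^ 2) (q ^ 2) (s ^ 2) + rang (q ^ 2) (p ^ 2) (s ^ 2) + rang (s ^ 2) (p ^ 2) (q ^ 2)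
      = π := by
  rcases le_or_gt (p + q) s with h1 | h1
  · exact rang_flat hp hq hs h1
  rcases le_or_gt (p + s) q with h2 | h2
  · have := rang_flat hp hs hq h2
    rw [rang_comm (p ^ 2) (s ^ 2), rang_comm (s ^ 2)] at this
    rw [← this, rang_comm (s ^ 2) (q ^ 2)]; ring
  rcases le_or_gt (q + s) p with h3 | h3
  · have := rang_flat hq hs hp h3
    rw [rang_comm (q ^ 2) (s ^ 2), rang_comm (s ^ 2) (q ^ 2)] at this
    linarith
  have hQ : 0 ≤ 4 * q ^ 2 * s ^ 2 - (q ^ 2 + s ^ 2 - p ^ 2) ^ 2 := by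
    have : 4 * q ^ 2 * s ^ 2 - (q ^ 2 + s ^ 2 - p ^ 2) ^ 2 =
      (p + q + s) * ((q + s - p) * ((p + s - q) * (p + q - s))) := by ring
    rw [this]
    exact mul_nonneg (by linarith) (mul_nonneg (by linarith)
      (mul_nonneg (by linarith) (by linarith)))
  unfold rang
  rw [Real.sqrt_sq hp.le, Real.sqrt_sq hq.le, Real.sqrt_sq hs.le]
  have hbd : ∀ {p q s : ℝ}, 0 < q → 0 < s → p < q + s → s < p + q → q < p + s →
      -1 ≤ (q ^ 2 + s ^ 2 - p ^ 2) / (2 * q * s) ∧ (q ^ 2 + s ^ 2 - p ^ 2) / (2 * q * s) ≤ 1 := by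
    intro p q s hq hs h1 h2 h3
    rw [le_div_iff₀ (by positivity), div_le_iff₀ (by positivity)]
    constructor <;> nlinarith
  obtain ⟨b1, b2⟩ := hbd hq hs h3 h1 h2
  obtain ⟨b3, b4⟩ := hbd hp hs h2 (by linarith : s < q + p) h3
  set a := (q ^ 2 + s ^ 2 - p ^ 2) / (2 * q * s) with ha
  set b := (p ^ 2 + s ^ 2 - q ^ 2) / (2 * p * s) with hb
  have hab : -a ≤ b := by
    have : 0 ≤ a + b := by
      have e : a + b = (p + q) * ((s + p - q) * (s + q - p)) / (2 * p * q * s) := by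
        rw [ha, hb]; field_simp; ring
      rw [e]
      exact div_nonneg (mul_nonneg (by linarith) (mul_nonneg (by linarith) (by linarith)))
        (by positivity)
    linarith
  have hle : Real.arccos a + Real.arccos b ≤ π := by
    have := Real.antitone_arccos hab
    rw [Real.arccos_neg] at this
    linarith
  have hcos : Real.cos (Real.arccos a + Real.arccos b) = -((p ^ 2 + q ^ 2 - s ^ 2) / (2 * p * q)) := by
    have e1 : 1 - a ^ 2 = (4 * q ^ 2 * s ^ 2 - (q ^ 2 + s ^ 2 - p ^ 2) ^ 2) / (2 * q * s) ^ 2 := by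
      rw [ha]; field_simp; ring
    have e2 : 1 - b ^ 2 = (4 * q ^ 2 * s ^ 2 - (q ^ 2 + s ^ 2 - p ^ 2) ^ 2) / (2 * p * s) ^ 2 := by
      rw [hb]; field_simp; ring
    rw [Real.cos_add, Real.cos_arccos b1 b2, Real.cos_arccos b3 b4, Real.sin_arccos,
      Real.sin_arccos, e1, e2, Real.sqrt_div hQ, Real.sqrt_div hQ, Real.sqrt_sq (by positivity),
      Real.sqrt_sq (by positivity), ha, hb, div_mul_div_comm, div_mul_div_comm (√_),
      Real.mul_self_sqrt hQ]
    field_simp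
    ring
  have := Real.arccos_cos (add_nonneg (Real.arccos_nonneg a) (Real.arccos_nonneg b)) hle
  rw [hcos, Real.arccos_neg] at this
  linarith

/-- The generalized angles of a triangle sum up to `π`, even if the triangle is degenerate. -/
lemma th_sum {A B C : ℝ} (hA : 0 ≤ A) (hB : 0 ≤ B) (hC : 0 ≤ C) (x y z : ℝ) :
    th A B C x y z + th B A C y x z + th C A B z x y = π := by
  have ha := sq_pos (p := y) (q := z) hA
  have hb := sq_pos (p := x) (q := z) hB
  have hc := sq_pos (p := x) (q := y) hC
  have := rang_sum (Real.sqrt_pos.2 ha) (Real.sqrt_pos.2 hb) (Real.sqrt_pos.2 hc)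
  rw [Real.sq_sqrt ha.le, Real.sq_sqrt hb.le, Real.sq_sqrt hc.le] at this
  rw [← this]
  unfold th
  rw [sq_comm y x, sq_comm z y, sq_comm z x, rang_comm (sq x y C)]

/-! ### Combinatorics of the triangulation -/

section Comb

variable {Fc : Finset (Finset (Fin N))}

lemma triple_rot (i j k : Fin N) : ({k, i, j} : Finset (Fin N)) = {i, j, k} := by
  ext; simp; tauto

lemma triple_swap (i j k : Fin N) : ({j, i, k} : Finset (Fin N)) = {i, j, k} := by
  ext; simp; tauto

lemma card_triple_iff {i j k : Fin N} :
    ({i, j, k} : Finset (Fin N)).card = 3 ↔ i ≠ j ∧ i ≠ k ∧ j ≠ k := by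
  constructor
  · intro h
    refine ⟨?_, ?_, ?_⟩ <;> rintro rfl
    · rw [Finset.insert_eq_of_mem (by simp)] at h
      have := Finset.card_le_two (a := i) (b := k); omega
    · rw [Finset.insert_eq_of_mem (by simp)] at h
      have := Finset.card_le_two (a := j) (b := i); omega
    · rw [Finset.pair_eq_singleton] at h
      have := Finset.card_le_two (a := i) (b := j); omega
  · rintro ⟨h1, h2, h3⟩
    exact Finset.card_eq_three.2 ⟨i, j, k, h1, h2, h3, rfl⟩

lemma face_ne (hT : IsTriangulation Fc) {i j k : Fin N} (h : ({i, j, k} : Finset (Fin N)) ∈ Fc) :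
    i ≠ j ∧ i ≠ k ∧ j ≠ k := card_triple_iff.1 (hT.card3 _ h)

lemma pair_mem_edges {f : Finset (Fin N)} (hf : f ∈ Fc) {i j : Fin N} (hij : i ≠ j)
    (hi : i ∈ f) (hj : j ∈ f) : ({i, j} : Finset (Fin N)) ∈ edges Fc := by
  unfold edges
  refine Finset.mem_biUnion.2 ⟨f, hf, Finset.mem_powersetCard.2 ⟨?_, Finset.card_pair hij⟩⟩
  intro x hx
  simp only [Finset.mem_insert, Finset.mem_singleton] at hx
  rcases hx with rfl | rfl <;> assumption

/-- Double counting of the incident pairs of an edge and a face. -/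
lemma three_card_faces (hT : IsTriangulation Fc) : 3 * Fc.card = 2 * (edges Fc).card := by
  have h := Finset.sum_card_bipartiteAbove_eq_sum_card_bipartiteBelow (s := Fc) (t := edges Fc)
    (fun f e => e ⊆ f)
  have h1 : ∀ f ∈ Fc, (Finset.bipartiteAbove (fun f e => e ⊆ f) (edges Fc) f).card = 3 := by
    intro f hf
    have : Finset.bipartiteAbove (fun f e => e ⊆ f) (edges Fc) f = f.powersetCard 2 := by
      ext e
      simp only [Finset.mem_bipartiteAbove, Finset.mem_powersetCard, edges, Finset.mem_biUnion]
      constructor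
      · rintro ⟨⟨g, _, _, h⟩, h'⟩; exact ⟨h', h⟩
      · rintro ⟨h, h'⟩; exact ⟨⟨f, hf, h, h'⟩, h⟩
    rw [this, Finset.card_powersetCard, hT.card3 f hf]; rfl
  have h2 : ∀ e ∈ edges Fc, (Finset.bipartiteBelow (fun f e => e ⊆ f) Fc e).card = 2 :=
    fun e he => hT.edge2 e he
  rw [Finset.sum_congr rfl h1, Finset.sum_congr rfl h2] at h
  simp only [Finset.sum_const, smul_eq_mul] at h
  omega

lemma triple_eq_iff {f : Finset (Fin N)} (hf : f.card = 3) (i j k : Fin N) :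
    {i, j, k} = f ↔ i ∈ f ∧ j ∈ f.erase i ∧ k ∈ (f.erase i).erase j := by
  constructor
  · rintro rfl
    obtain ⟨h1, h2, h3⟩ := card_triple_iff.1 hf
    simp [h1.symm, h2.symm, h3.symm]
  · rintro ⟨h1, h2, h3⟩
    simp only [Finset.mem_erase] at h2 h3
    refine Finset.eq_of_subset_of_card_le ?_ ?_
    · intro x hx
      simp only [Finset.mem_insert, Finset.mem_singleton] at hx
      rcases hx with rfl | rfl | rfl
      exacts [h1, h2.2, h3.2.2]
    · rw [hf, card_triple_iff.2 ⟨h2.1.symm, h3.2.1.symm, h3.1.symm⟩]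

/-- The indicator function of the ordered triples which span a face. -/
def ind (Fc : Finset (Finset (Fin N))) (i j k : Fin N) : ℝ :=
  if ({i, j, k} : Finset (Fin N)) ∈ Fc then 1 else 0

lemma ind_swap (i j k : Fin N) : ind Fc j i k = ind Fc i j k := by
  unfold ind; rw [triple_swap]

lemma ind_rot (i j k : Fin N) : ind Fc k i j = ind Fc i j k := by
  unfold ind; rw [triple_rot]

lemma ind_nonneg (i j k : Fin N) : 0 ≤ ind Fc i j k := by
  unfold ind; split_ifs <;> norm_num

/-- Every face has six orderings of its vertices. -/
lemma sum_ind (hT : IsTriangulation Fc) : ∑ i, ∑ j, ∑ k, ind Fc i j k = 6 * Fc.card := by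
  have h1 : ∀ i j k, ind Fc i j k =
      ∑ f ∈ Fc, if ({i, j, k} : Finset (Fin N)) = f then (1 : ℝ) else 0 := by
    intro i j k; rw [Finset.sum_ite_eq]; rfl
  have h2 : ∀ f ∈ Fc, ∑ i, ∑ j, ∑ k, (if ({i, j, k} : Finset (Fin N)) = f then (1 : ℝ) else 0)
      = 6 := by
    intro f hf
    have hf3 := hT.card3 f hf
    have h3 : ∀ i j k, (if ({i, j, k} : Finset (Fin N)) = f then (1 : ℝ) else 0) =
        if i ∈ f then (if j ∈ f.erase i then (if k ∈ (f.erase i).erase j then 1 else 0) else 0)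
          else 0 := by
      intro i j k
      simp only [triple_eq_iff hf3, ite_and]
    simp only [h3]
    have h4 : ∀ i ∈ f, ∀ j ∈ f.erase i, ((f.erase i).erase j).card = 1 := by
      intro i hi j hj
      rw [Finset.card_erase_of_mem hj, Finset.card_erase_of_mem hi, hf3]
    calc _ = ∑ i ∈ f, ∑ j ∈ f.erase i, ∑ k ∈ (f.erase i).erase j, (1 : ℝ) := by
          simp only [Finset.sum_ite_irrel, Finset.sum_const_zero, Finset.sum_ite_mem,
            Finset.univ_inter]
      _ = ∑ i ∈ f, ∑ j ∈ f.erase i, (1 : ℝ) := by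
          refine Finset.sum_congr rfl fun i hi => Finset.sum_congr rfl fun j hj => ?_
          simp [h4 i hi j hj]
      _ = ∑ i ∈ f, (2 : ℝ) := by
          refine Finset.sum_congr rfl fun i hi => ?_
          simp [Finset.card_erase_of_mem hi, hf3]
      _ = 6 := by simp [hf3]; norm_num
  simp only [h1]
  calc _ = ∑ f ∈ Fc, ∑ i, ∑ j, ∑ k,
        (if ({i, j, k} : Finset (Fin N)) = f then (1 : ℝ) else 0) := by
        simp_rw [Finset.sum_comm (s := Finset.univ) (t := Fc)]
    _ = _ := by rw [Finset.sum_congr rfl h2]; simp [mul_comm]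

/-- A sum over ordered faces may be symmetrized over the three vertices. -/
lemma sum_ind_symm (g : Fin N → Fin N → Fin N → ℝ) :
    ∑ i, ∑ j, ∑ k, ind Fc i j k * (g i j k + g j i k + g k i j) =
      3 * ∑ i, ∑ j, ∑ k, ind Fc i j k * g i j k := by
  simp only [mul_add, Finset.sum_add_distrib]
  have h1 : ∑ i, ∑ j, ∑ k, ind Fc i j k * g j i k = ∑ i, ∑ j, ∑ k, ind Fc i j k * g i j k := by
    rw [Finset.sum_comm]
    exact Finset.sum_congr rfl fun i _ => Finset.sum_congr rfl fun j _ =>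
      Finset.sum_congr rfl fun k _ => by rw [ind_swap]
  have h2 : ∑ i, ∑ j, ∑ k, ind Fc i j k * g k i j = ∑ i, ∑ j, ∑ k, ind Fc i j k * g i j k := by
    calc ∑ i, ∑ j, ∑ k, ind Fc i j k * g k i j = ∑ i, ∑ j, ∑ k, ind Fc k i j * g k i j :=
          Finset.sum_congr rfl fun i _ => Finset.sum_congr rfl fun j _ =>
            Finset.sum_congr rfl fun k _ => by rw [ind_rot i j k]
      _ = ∑ i, ∑ k, ∑ j, ind Fc k i j * g k i j :=
          Finset.sum_congr rfl fun i _ => Finset.sum_comm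
      _ = ∑ k, ∑ i, ∑ j, ind Fc k i j * g k i j := Finset.sum_comm
  rw [h1, h2]; ring

/-- A function on the vertices which is constant on each face is constant, as the one-skeleton is
connected. -/
lemma const_of_faces (hT : IsTriangulation Fc) {x : Fin N → ℝ}
    (hx : ∀ i j k, ({i, j, k} : Finset (Fin N)) ∈ Fc → x i = x j) : ∃ t : ℝ, x = fun _ => t := by
  have hE : ∀ i j, i ≠ j → ({i, j} : Finset (Fin N)) ∈ edges Fc → x i = x j := by
    intro i j hij h
    unfold edges at h
    obtain ⟨f, hf, h2⟩ := Finset.mem_biUnion.1 h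
    rw [Finset.mem_powersetCard] at h2
    obtain ⟨k, hk⟩ : ∃ k, k ∈ (f.erase i).erase j := by
      apply Finset.card_pos.1
      have hi : i ∈ f := h2.1 (by simp)
      have hj : j ∈ f := h2.1 (by simp)
      rw [Finset.card_erase_of_mem (Finset.mem_erase.2 ⟨hij.symm, hj⟩),
        Finset.card_erase_of_mem hi, hT.card3 f hf]
      norm_num
    have := (triple_eq_iff (hT.card3 f hf) i j k).2
      ⟨h2.1 (by simp), Finset.mem_erase.2 ⟨hij.symm, h2.1 (by simp)⟩, hk⟩
    exact hx i j k (this ▸ hf)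
  obtain ⟨i0⟩ := hT.conn.nonempty
  refine ⟨x i0, funext fun j => ?_⟩
  obtain ⟨w⟩ := hT.conn.preconnected j i0
  induction w with
  | nil => rfl
  | cons hadj _ ih =>
    rw [SimpleGraph.fromRel_adj] at hadj
    rw [← ih]
    rcases hadj.2 with h | h
    · exact hE _ _ hadj.1 h
    · exact (hE _ _ hadj.1.symm h).symm

end Comb

/-! ### Faces of the triangulation and normalized weights -/

/-- The generalized angle at `i` of the face `ijk`, as a function of `u`. -/
noncomputable def tha (I : Finset (Fin N) → ℝ) (u : Fin N → ℝ) (i j k : Fin N) : ℝ :=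
  th (I {j, k}) (I {i, k}) (I {i, j}) (u i) (u j) (u k)

/-- The coordinate functional `u ↦ u_i`. -/
noncomputable def pr (i : Fin N) : (Fin N → ℝ) →L[ℝ] ℝ := ContinuousLinearMap.proj i

@[simp] lemma pr_apply (i : Fin N) (u : Fin N → ℝ) : pr i u = u i := rfl

/-- The angle one-form of the face `ijk`. -/
noncomputable def omf (I : Finset (Fin N) → ℝ) (i j k : Fin N) (u : Fin N → ℝ) :
    (Fin N → ℝ) →L[ℝ] ℝ :=
  omr (I {j, k}) (I {i, k}) (I {i, j}) (pr i) (pr j) (pr k) u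

lemma omf_apply (I : Finset (Fin N) → ℝ) (i j k : Fin N) (u v : Fin N → ℝ) :
    omf I i j k u v = tha I u i j k * v i + tha I u j i k * v j + tha I u k i j * v k := by
  unfold omf omr tha
  simp only [add_apply, smul_apply, smul_eq_mul, pr_apply]
  rw [Finset.pair_comm j i, Finset.pair_comm k j, Finset.pair_comm k i]

/-- The bilinear form `qf` of the face `ijk`. -/
noncomputable def qff (I : Finset (Fin N) → ℝ) (i j k : Fin N) (u v w : Fin N → ℝ) : ℝ :=
  qf (I {j, k}) (I {i, k}) (I {i, j}) (u i) (u j) (u k) (v i) (v j) (v k) (w i) (w j) (w k)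

/-- Heron's polynomial of the face `ijk`. -/
noncomputable def discf (I : Finset (Fin N) → ℝ) (i j k : Fin N) (u : Fin N → ℝ) : ℝ :=
  disc (I {j, k}) (I {i, k}) (I {i, j}) (u i) (u j) (u k)

lemma len_eq (I : Finset (Fin N) → ℝ) (u : Fin N → ℝ) (i j : Fin N) :
    len I (rOf u) i j = √(sq (u i) (u j) (I {i, j})) := rfl

section Faces

variable {Fc : Finset (Finset (Fin N))} {I : Finset (Fin N) → ℝ}

lemma weight_nonneg (hT : IsTriangulation Fc) (hI : ∀ e ∈ edges Fc, 0 ≤ I e) {i j k : Fin N}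
    (h : ({i, j, k} : Finset (Fin N)) ∈ Fc) : 0 ≤ I {j, k} ∧ 0 ≤ I {i, k} ∧ 0 ≤ I {i, j} := by
  obtain ⟨h1, h2, h3⟩ := face_ne hT h
  exact ⟨hI _ (pair_mem_edges h h3 (by simp) (by simp)),
    hI _ (pair_mem_edges h h2 (by simp) (by simp)), hI _ (pair_mem_edges h h1 (by simp) (by simp))⟩

/-- `Real.arccos` is by definition constant outside `[-1, 1]`, just like `Lam`. -/
lemma Lam_eq_arccos (x : ℝ) : Lam x = Real.arccos x := by
  unfold Lam
  split_ifs with h1 h2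
  · exact (Real.arccos_eq_pi.2 h1).symm
  · rfl
  · exact (Real.arccos_eq_zero.2 (not_le.1 h2).le).symm

lemma Lam_cosAng (hT : IsTriangulation Fc) (hI : ∀ e ∈ edges Fc, 0 ≤ I e) {i j k : Fin N}
    (h : ({i, j, k} : Finset (Fin N)) ∈ Fc) (u : Fin N → ℝ) :
    Lam (cosAng I (rOf u) i j k) = tha I u i j k := by
  obtain ⟨h1, h2, h3⟩ := weight_nonneg hT hI h
  unfold tha th rang cosAng
  rw [Lam_eq_arccos, len_eq, len_eq, len_eq, Real.sq_sqrt (sq_pos h1).le,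
    Real.sq_sqrt (sq_pos h2).le, Real.sq_sqrt (sq_pos h3).le]
  congr 1; ring

lemma Kt_eq (hT : IsTriangulation Fc) (hI : ∀ e ∈ edges Fc, 0 ≤ I e) (u : Fin N → ℝ) (i : Fin N) :
    Kt Fc I (rOf u) i = 2 * π - (1 / 2) * ∑ j, ∑ k, ind Fc i j k * tha I u i j k := by
  unfold Kt ind
  congr 2
  refine Finset.sum_congr rfl fun j _ => Finset.sum_congr rfl fun k _ => ?_
  split_ifs with h
  · rw [Lam_cosAng hT hI h, one_mul]
  · rw [zero_mul]

lemma discf_pos (hT : IsTriangulation Fc) (hI : ∀ e ∈ edges Fc, 0 ≤ I e) {i j k : Fin N}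
    (h : ({i, j, k} : Finset (Fin N)) ∈ Fc) {u : Fin N → ℝ} (hu : u ∈ lnOmega Fc I) :
    0 < discf I i j k u := by
  obtain ⟨h1, h2, h3⟩ := weight_nonneg hT hI h
  have t1 := hu.2 i j k h
  have t2 := hu.2 j i k (by rwa [triple_swap])
  have t3 := hu.2 k i j (by rwa [triple_rot])
  simp only [len_eq] at t1 t2 t3
  rw [Finset.pair_comm j i, sq_comm (u j) (u i)] at t2
  rw [Finset.pair_comm k i, sq_comm (u k) (u i), Finset.pair_comm k j, sq_comm (u k) (u j)] at t3
  have ha := sq_pos (p := u j) (q := u k) h1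
  have hb := sq_pos (p := u i) (q := u k) h2
  have hc := sq_pos (p := u i) (q := u j) h3
  unfold discf disc
  set a := sq (u j) (u k) (I {j, k})
  set b := sq (u i) (u k) (I {i, k})
  set c := sq (u i) (u j) (I {i, j})
  have e : 4 * b * c - (b + c - a) ^ 2 =
      (√a + √b + √c) * ((√c + √b - √a) * ((√c + √a - √b) * (√b + √a - √c))) := by
    nth_rewrite 1 2 [← Real.sq_sqrt hc.le]
    nth_rewrite 1 2 [← Real.sq_sqrt hb.le]
    nth_rewrite 1 [← Real.sq_sqrt ha.le]
    ring
  rw [e]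
  have := Real.sqrt_pos.2 ha
  have := Real.sqrt_pos.2 hb
  have := Real.sqrt_pos.2 hc
  exact mul_pos (by positivity) (mul_pos (by linarith) (mul_pos (by linarith) (by linarith)))

lemma isOpen_lnOmega : IsOpen (lnOmega Fc I) := by
  have : lnOmega Fc I = ⋂ i, ⋂ j, ⋂ k, {u | ({i, j, k} : Finset (Fin N)) ∈ Fc →
      len I (rOf u) j k < len I (rOf u) i j + len I (rOf u) i k} := by
    ext u
    simp only [Set.mem_iInter, Set.mem_ofPred_eq]
    exact ⟨fun h => h.2, fun h => ⟨fun i => Real.exp_pos _, h⟩⟩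
  rw [this]
  refine isOpen_iInter_of_finite fun i => isOpen_iInter_of_finite fun j =>
    isOpen_iInter_of_finite fun k => ?_
  by_cases h : ({i, j, k} : Finset (Fin N)) ∈ Fc
  · simp only [h, true_imp_iff]
    refine isOpen_lt ?_ ?_ <;> · unfold len rOf; fun_prop
  · simp [h]

end Faces

section Alpha

/-- `Σ_j r_j^α`. -/
noncomputable def zsum (α : ℝ) (u : Fin N → ℝ) : ℝ := ∑ j, Real.exp (α * u j)

/-- The normalized weights `r_i^α / Σ_j r_j^α`. -/
noncomputable def wgt (α : ℝ) (u : Fin N → ℝ) (i : Fin N) : ℝ := Real.exp (α * u i) / zsum α u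

/-- The covariance of `v` and `w` for the normalized weights. -/
noncomputable def cov (α : ℝ) (u v w : Fin N → ℝ) : ℝ :=
  ∑ i, wgt α u i * v i * w i - (∑ i, wgt α u i * v i) * ∑ i, wgt α u i * w i

lemma cov_symm (α : ℝ) (u v w : Fin N → ℝ) : cov α u v w = cov α u w v := by
  unfold cov
  rw [mul_comm (∑ i, wgt α u i * v i)]
  congr 1
  exact Finset.sum_congr rfl fun i _ => by ring

variable [NeZero N] (α : ℝ)

lemma zsum_pos (u : Fin N → ℝ) : 0 < zsum α u :=
  Finset.sum_pos (fun _ _ => Real.exp_pos _) Finset.univ_nonempty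

lemma wgt_pos (u : Fin N → ℝ) (i : Fin N) : 0 < wgt α u i :=
  div_pos (Real.exp_pos _) (zsum_pos α u)

lemma sum_wgt (u : Fin N → ℝ) : ∑ i, wgt α u i = 1 := by
  unfold wgt
  rw [← Finset.sum_div]
  exact div_self (zsum_pos α u).ne'

lemma contDiff_wgt {n : WithTop ℕ∞} (i : Fin N) : ContDiff ℝ n fun u : Fin N → ℝ => wgt α u i := by
  unfold wgt
  refine ContDiff.div (by fun_prop) ?_ fun u => (zsum_pos α u).ne'
  unfold zsum
  fun_prop

/-- The one-form of the normalized weights is the differential of `(1 / α) log Σ_j r_j^α`, or of the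
mean of the coordinates when `α = 0`. -/
lemma exists_alpha_potential : ∃ f : (Fin N → ℝ) → ℝ, ∀ u,
    HasFDerivAt f (∑ i, wgt α u i • pr i) u := by
  by_cases hα : α = 0
  · subst hα
    refine ⟨fun u => (∑ i, (1 / (N : ℝ)) • pr i) u, fun u => ?_⟩
    have e : ∀ i, wgt 0 u i = 1 / N := by intro i; simp [wgt, zsum]
    simp only [e]
    exact ContinuousLinearMap.hasFDerivAt _
  · refine ⟨fun u => (1 / α) * Real.log (zsum α u), fun u => ?_⟩
    have h1 : HasFDerivAt (zsum α) (∑ i, Real.exp (α * u i) • α • (pr i : (Fin N → ℝ) →L[ℝ] ℝ)) u := by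
      unfold zsum
      refine HasFDerivAt.fun_sum fun i _ => ?_
      exact ((pr i).hasFDerivAt.const_mul α).exp
    refine ((h1.log (zsum_pos α u).ne').const_mul (1 / α)).congr_fderiv ?_
    rw [Finset.smul_sum, Finset.smul_sum]
    refine Finset.sum_congr rfl fun i _ => ?_
    simp only [smul_smul, wgt]
    congr 1
    field_simp

lemma hasDerivAt_wgt (u v w : Fin N → ℝ) (t : ℝ) :
    HasDerivAt (fun t : ℝ => ∑ i, wgt α (u + t • v) i * w i) (α * cov α (u + t • v) v w) t := by
  have hl : ∀ i, HasDerivAt (fun t : ℝ => Real.exp (α * (u + t • v) i))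
      (Real.exp (α * (u + t • v) i) * (α * v i)) t := by
    intro i
    have : HasDerivAt (fun t : ℝ => (u + t • v) i) (v i) t := by
      simpa using ((hasDerivAt_id t).mul_const (v i)).const_add (u i)
    exact (this.const_mul α).exp
  have hz : HasDerivAt (fun t : ℝ => zsum α (u + t • v))
      (∑ i, Real.exp (α * (u + t • v) i) * (α * v i)) t := HasDerivAt.fun_sum fun i _ => hl i
  have hw : ∀ i, HasDerivAt (fun t : ℝ => wgt α (u + t • v) i * w i) _ t := fun i =>
    ((hl i).div hz (zsum_pos α _).ne').mul_const (w i)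
  refine (HasDerivAt.fun_sum fun i _ => hw i).congr_deriv ?_
  have hZ := (zsum_pos α (u + t • v)).ne'
  unfold cov
  have e : ∑ i, Real.exp (α * (u + t • v) i) * (α * v i) =
      α * zsum α (u + t • v) * ∑ i, wgt α (u + t • v) i * v i := by
    rw [Finset.mul_sum]
    refine Finset.sum_congr rfl fun i _ => ?_
    unfold wgt; field_simp
  rw [e]
  generalize ∑ i, wgt α (u + t • v) i * v i = m
  rw [mul_sub, Finset.mul_sum, Finset.mul_sum, Finset.mul_sum, ← Finset.sum_sub_distrib]
  refine Finset.sum_congr rfl fun i _ => ?_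
  unfold wgt
  field_simp

lemma cov_nonneg (u v : Fin N → ℝ) : 0 ≤ cov α u v v := by
  have h := sum_wgt α u
  have e : cov α u v v = ∑ i, wgt α u i * (v i - ∑ j, wgt α u j * v j) ^ 2 := by
    unfold cov
    generalize hm : ∑ j, wgt α u j * v j = m
    have : ∀ i, wgt α u i * (v i - m) ^ 2 =
        wgt α u i * v i * v i - 2 * m * (wgt α u i * v i) + m ^ 2 * wgt α u i := by intro i; ring
    simp only [this, Finset.sum_add_distrib, Finset.sum_sub_distrib, ← Finset.mul_sum, hm, h]
    ring
  rw [e]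
  exact Finset.sum_nonneg fun i _ => mul_nonneg (wgt_pos α u i).le (sq_nonneg _)

end Alpha

/-! ### The gradient one-form -/

section Global

variable {Fc : Finset (Finset (Fin N))} {I : Finset (Fin N) → ℝ}

lemma extGrad_eq (hT : IsTriangulation Fc) (hI : ∀ e ∈ edges Fc, 0 ≤ I e) (α : ℝ) (u : Fin N → ℝ)
    (i : Fin N) : extGrad Fc I α u i = 2 * π - (1 / 2) * ∑ j, ∑ k, ind Fc i j k * tha I u i j k -
      2 * π * chi Fc * wgt α u i := by
  have h : ∀ j, rOf u j ^ α = Real.exp (α * u j) := by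
    intro j; unfold rOf; rw [mul_comm, Real.exp_mul]
  unfold extGrad sA wgt zsum
  rw [Kt_eq hT hI]
  simp only [h]
  ring

/-- The one-form `Σ_m (K̃_m - s_α r_m^α) du_m`. -/
noncomputable def gradForm (Fc : Finset (Finset (Fin N))) (I : Finset (Fin N) → ℝ) (α : ℝ)
    (u : Fin N → ℝ) : (Fin N → ℝ) →L[ℝ] ℝ := ∑ m, extGrad Fc I α u m • pr m

lemma gradForm_apply (α : ℝ) (u v : Fin N → ℝ) :
    gradForm Fc I α u v = ∑ m, extGrad Fc I α u m * v m := by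
  simp [gradForm, sum_apply]

lemma gradForm_single (α : ℝ) (u : Fin N → ℝ) (i : Fin N) :
    gradForm Fc I α u (Pi.single i 1) = extGrad Fc I α u i := by
  simp [gradForm_apply, Pi.single_apply]

/-- Regrouping the angles by faces, the gradient one-form is a combination of the angle one-forms
of the faces, of `d(Σ u_m)`, and of the form with the normalized weights as coefficients. -/
lemma gradForm_eq (hT : IsTriangulation Fc) (hI : ∀ e ∈ edges Fc, 0 ≤ I e) (α : ℝ)
    (u : Fin N → ℝ) : gradForm Fc I α u = (2 * π) • ∑ m, pr m -
      (1 / 6 : ℝ) • ∑ i, ∑ j, ∑ k, ind Fc i j k • omf I i j k u -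
      (2 * π * chi Fc) • ∑ m, wgt α u m • pr m := by
  ext1 v
  rw [gradForm_apply]
  have h := sum_ind_symm (Fc := Fc) fun i j k => tha I u i j k * v i
  simp only [sub_apply, smul_apply, sum_apply, smul_eq_mul, pr_apply, omf_apply]
  rw [h]
  simp only [extGrad_eq hT hI, sub_mul, Finset.sum_sub_distrib, ← Finset.mul_sum]
  congr 1
  · congr 1
    rw [Finset.mul_sum, Finset.mul_sum]
    refine Finset.sum_congr rfl fun i _ => ?_
    simp only [← mul_assoc, ← Finset.sum_mul]
    ring
  · rw [Finset.mul_sum]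
    exact Finset.sum_congr rfl fun i _ => by ring

/-- The gradient one-form is exact. -/
lemma exists_potential [NeZero N] (hT : IsTriangulation Fc) (hI : ∀ e ∈ edges Fc, 0 ≤ I e)
    (α : ℝ) : ∃ F : (Fin N → ℝ) → ℝ, ∀ u, HasFDerivAt F (gradForm Fc I α u) u := by
  have h1 : ∀ i j k, ∃ f : (Fin N → ℝ) → ℝ, ∀ u, HasFDerivAt f (ind Fc i j k • omf I i j k u) u := by
    intro i j k
    by_cases h : ({i, j, k} : Finset (Fin N)) ∈ Fc
    · obtain ⟨hA, hB, hC⟩ := weight_nonneg hT hI h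
      obtain ⟨f, hf⟩ := exists_face_potential hA hB hC (pr i) (pr j) (pr k)
      exact ⟨fun u => ind Fc i j k • f u, fun u => (hf u).fun_const_smul _⟩
    · exact ⟨fun _ => 0, fun u => by simpa [ind, h] using hasFDerivAt_const (0 : ℝ) u⟩
  choose f hf using h1
  obtain ⟨g, hg⟩ := exists_alpha_potential (N := N) α
  refine ⟨fun u => (2 * π) • (∑ m, pr m) u - (1 / 6 : ℝ) • ∑ i, ∑ j, ∑ k, f i j k u -
    (2 * π * chi Fc) • g u, fun u => ?_⟩
  rw [gradForm_eq hT hI]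
  refine HasFDerivAt.sub (HasFDerivAt.sub ?_ ?_) ((hg u).fun_const_smul _)
  · exact (ContinuousLinearMap.hasFDerivAt _).fun_const_smul _
  · exact (HasFDerivAt.fun_sum fun i _ => HasFDerivAt.fun_sum fun j _ =>
      HasFDerivAt.fun_sum fun k _ => hf i j k u).fun_const_smul _

lemma continuous_ind_omf (hT : IsTriangulation Fc) (hI : ∀ e ∈ edges Fc, 0 ≤ I e)
    (i j k : Fin N) : Continuous fun u : Fin N → ℝ => ind Fc i j k • omf I i j k u := by
  by_cases h : ({i, j, k} : Finset (Fin N)) ∈ Fc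
  · obtain ⟨hA, hB, hC⟩ := weight_nonneg hT hI h
    have h1 : Continuous (omf I i j k) := continuous_omr hA hB hC (pr i) (pr j) (pr k)
    exact h1.const_smul (ind Fc i j k)
  · simpa [ind, h] using continuous_const

lemma contDiffAt_ind_omf (hT : IsTriangulation Fc) (hI : ∀ e ∈ edges Fc, 0 ≤ I e)
    (i j k : Fin N) {u : Fin N → ℝ} (hu : u ∈ lnOmega Fc I) {n : WithTop ℕ∞} :
    ContDiffAt ℝ n (fun u : Fin N → ℝ => ind Fc i j k • omf I i j k u) u := by
  by_cases h : ({i, j, k} : Finset (Fin N)) ∈ Fc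
  · obtain ⟨hA, hB, hC⟩ := weight_nonneg hT hI h
    have hd : 0 < disc (I {j, k}) (I {i, k}) (I {i, j}) (pr i u) (pr j u) (pr k u) :=
      discf_pos hT hI h hu
    have h1 : ContDiffAt ℝ n (omf I i j k) u :=
      (((contDiffAt_th hA hB hC (pr i) (pr j) (pr k) hd).smul contDiffAt_const).add
        ((contDiffAt_th hB hA hC (pr j) (pr i) (pr k) (by rwa [disc_swap])).smul
          contDiffAt_const)).add
        ((contDiffAt_th hC hA hB (pr k) (pr i) (pr j) (by rwa [disc_rot])).smul contDiffAt_const)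
    exact h1.const_smul (ind Fc i j k)
  · have : (fun u : Fin N → ℝ => ind Fc i j k • omf I i j k u) = fun _ => 0 := by simp [ind, h]
    rw [this]
    exact contDiffAt_const

lemma hasDerivAt_ind_omf (hT : IsTriangulation Fc) (hI : ∀ e ∈ edges Fc, 0 ≤ I e)
    (i j k : Fin N) (u v w : Fin N → ℝ) {t : ℝ} (hu : u + t • v ∈ lnOmega Fc I) :
    HasDerivAt (fun t : ℝ => ind Fc i j k * (-omf I i j k (u + t • v) w))
      (ind Fc i j k * qff I i j k (u + t • v) v w) t := by
  by_cases h : ({i, j, k} : Finset (Fin N)) ∈ Fc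
  · obtain ⟨hA, hB, hC⟩ := weight_nonneg hT hI h
    have h1 : HasDerivAt (fun t : ℝ => omf I i j k (u + t • v) w)
        (-qff I i j k (u + t • v) v w) t := by
      have hd := discf_pos hT hI h hu
      simp only [discf, ← pr_apply] at hd
      simp only [qff, ← pr_apply]
      exact hasDerivAt_omr hA hB hC (pr i) (pr j) (pr k) w hd
    have h2 := h1.fun_neg.const_mul (ind Fc i j k)
    rwa [neg_neg] at h2
  · have h0 : ind Fc i j k = 0 := by simp [ind, h]
    simpa [h0] using hasDerivAt_const t (0 : ℝ)

lemma monotone_ind_omf (hT : IsTriangulation Fc) (hI : ∀ e ∈ edges Fc, 0 ≤ I e)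
    (i j k : Fin N) (u v : Fin N → ℝ) :
    Monotone fun t : ℝ => ind Fc i j k * (-omf I i j k (u + t • v) v) := by
  by_cases h : ({i, j, k} : Finset (Fin N)) ∈ Fc
  · obtain ⟨hA, hB, hC⟩ := weight_nonneg hT hI h
    have h1 : Monotone fun t : ℝ => -omf I i j k (u + t • v) v :=
      monotone_neg_omr hA hB hC (pr i) (pr j) (pr k) u v
    exact h1.const_mul (ind_nonneg i j k)
  · have h0 : ind Fc i j k = 0 := by simp [ind, h]
    simpa [h0] using monotone_const

lemma continuous_gradForm [NeZero N] (hT : IsTriangulation Fc) (hI : ∀ e ∈ edges Fc, 0 ≤ I e)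
    (α : ℝ) : Continuous (gradForm Fc I α) := by
  have e : gradForm Fc I α = _ := funext (gradForm_eq hT hI α)
  rw [e]
  have h1 : Continuous fun u : Fin N → ℝ => ∑ i, ∑ j, ∑ k, ind Fc i j k • omf I i j k u :=
    continuous_finsetSum _ fun i _ => continuous_finsetSum _
      fun j _ => continuous_finsetSum _ fun k _ => continuous_ind_omf hT hI i j k
  have h2 : Continuous fun u : Fin N → ℝ =>
      ∑ m, wgt α u m • (pr m : (Fin N → ℝ) →L[ℝ] ℝ) :=
    continuous_finsetSum _ fun m _ =>
      (contDiff_wgt (n := 0) α m).continuous.smul continuous_const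
  exact (continuous_const.sub (h1.const_smul (1 / 6 : ℝ))).sub (h2.const_smul (2 * π * (chi Fc : ℝ)))

lemma contDiffAt_gradForm [NeZero N] (hT : IsTriangulation Fc) (hI : ∀ e ∈ edges Fc, 0 ≤ I e)
    (α : ℝ) {u : Fin N → ℝ} (hu : u ∈ lnOmega Fc I) {n : WithTop ℕ∞} :
    ContDiffAt ℝ n (gradForm Fc I α) u := by
  have e : gradForm Fc I α = _ := funext (gradForm_eq hT hI α)
  rw [e]
  have h1 : ContDiffAt ℝ n
      (fun u : Fin N → ℝ => ∑ i, ∑ j, ∑ k, ind Fc i j k • omf I i j k u) u :=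
    ContDiffAt.sum fun i _ => ContDiffAt.sum
      fun j _ => ContDiffAt.sum fun k _ => contDiffAt_ind_omf hT hI i j k hu
  have h2 : ContDiffAt ℝ n (fun u : Fin N → ℝ =>
      ∑ m, wgt α u m • (pr m : (Fin N → ℝ) →L[ℝ] ℝ)) u :=
    ContDiffAt.sum fun m _ => (contDiff_wgt α m).contDiffAt.smul contDiffAt_const
  exact (contDiffAt_const.sub (h1.const_smul _)).sub (h2.const_smul _)

/-- The Hessian of the potential at a nondegenerate point, as a bilinear form. -/
noncomputable def hess (Fc : Finset (Finset (Fin N))) (I : Finset (Fin N) → ℝ) (α : ℝ)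
    (u v w : Fin N → ℝ) : ℝ :=
  (1 / 6) * ∑ i, ∑ j, ∑ k, ind Fc i j k * qff I i j k u v w - 2 * π * chi Fc * (α * cov α u v w)

lemma gradForm_line (hT : IsTriangulation Fc) (hI : ∀ e ∈ edges Fc, 0 ≤ I e)
    (α : ℝ) (u w : Fin N → ℝ) : gradForm Fc I α u w = 2 * π * ∑ m, w m + (1 / 6) *
      ∑ i, ∑ j, ∑ k, ind Fc i j k * (-omf I i j k u w) - 2 * π * chi Fc * ∑ m, wgt α u m * w m := by
  rw [gradForm_eq hT hI]
  simp only [sub_apply, smul_apply, sum_apply, smul_eq_mul, pr_apply, mul_neg, Finset.sum_neg_distrib]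
  ring

lemma hasDerivAt_gradForm [NeZero N] (hT : IsTriangulation Fc) (hI : ∀ e ∈ edges Fc, 0 ≤ I e)
    (α : ℝ) (u v w : Fin N → ℝ) {t : ℝ} (hu : u + t • v ∈ lnOmega Fc I) :
    HasDerivAt (fun t : ℝ => gradForm Fc I α (u + t • v) w) (hess Fc I α (u + t • v) v w) t := by
  simp only [gradForm_line hT hI α]
  refine HasDerivAt.sub (HasDerivAt.const_add _ ?_) ((hasDerivAt_wgt α u v w t).const_mul _)
  exact HasDerivAt.const_mul _ (HasDerivAt.fun_sum fun i _ => HasDerivAt.fun_sum fun j _ =>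
    HasDerivAt.fun_sum fun k _ => hasDerivAt_ind_omf hT hI i j k u v w hu)

/-- The derivative of the potential is monotone along lines: the angle part is so face by face, and the
weight part has derivative `-2π αχ(M)` times a variance. -/
lemma monotone_gradForm [NeZero N] (hT : IsTriangulation Fc) (hI : ∀ e ∈ edges Fc, 0 ≤ I e)
    {α : ℝ} (hα : α * (chi Fc : ℝ) ≤ 0) (u v : Fin N → ℝ) :
    Monotone fun t : ℝ => gradForm Fc I α (u + t • v) v := by
  simp only [gradForm_line hT hI α]
  have h1 : Monotone fun t : ℝ => -(2 * π * chi Fc * ∑ m, wgt α (u + t • v) m * v m) := by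
    refine monotone_of_hasDerivAt_nonneg
      (fun t => ((hasDerivAt_wgt α u v v t).const_mul (2 * π * (chi Fc : ℝ))).neg) fun t => ?_
    have := mul_nonneg (mul_nonneg Real.two_pi_pos.le (neg_nonneg.2 hα))
      (cov_nonneg α (u + t • v) v)
    simp only [Pi.zero_apply]
    linarith
  intro s t hst
  have h3 : ∑ i, ∑ j, ∑ k, ind Fc i j k * (-omf I i j k (u + s • v) v) ≤
      ∑ i, ∑ j, ∑ k, ind Fc i j k * (-omf I i j k (u + t • v) v) :=
    Finset.sum_le_sum fun i _ => Finset.sum_le_sum fun j _ => Finset.sum_le_sum fun k _ =>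
      monotone_ind_omf hT hI i j k u v hst
  have h4 := h1 hst
  simp only at h4 ⊢
  linarith

/-- The Gauss–Bonnet formula `Σ K̃_i = 2πχ(M)` for the generalized angles. -/
lemma sum_extGrad [NeZero N] (hT : IsTriangulation Fc) (hI : ∀ e ∈ edges Fc, 0 ≤ I e) (α : ℝ)
    (u : Fin N → ℝ) : ∑ i, extGrad Fc I α u i = 0 := by
  have h := sum_ind_symm (Fc := Fc) fun i j k => tha I u i j k
  have h1 : ∀ i j k, ind Fc i j k * (tha I u i j k + tha I u j i k + tha I u k i j) =
      ind Fc i j k * π := by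
    intro i j k
    by_cases hf : ({i, j, k} : Finset (Fin N)) ∈ Fc
    · obtain ⟨hA, hB, hC⟩ := weight_nonneg hT hI hf
      unfold tha
      rw [Finset.pair_comm j i, Finset.pair_comm k j, Finset.pair_comm k i, th_sum hA hB hC]
    · simp [ind, hf]
  simp only [h1, ← Finset.sum_mul] at h
  rw [sum_ind hT] at h
  have h3 : (3 : ℝ) * Fc.card = 2 * (edges Fc).card := by exact_mod_cast three_card_faces hT
  simp only [extGrad_eq hT hI, Finset.sum_sub_distrib, ← Finset.mul_sum, sum_wgt, Finset.sum_const,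
    Finset.card_univ, Fintype.card_fin, nsmul_eq_mul, chi]
  push_cast
  linear_combination -π * h3 + (1/6) * h

end Global

/-! ### The potential and its Hessian -/

/-- A function whose derivative is monotone along every line is convex. -/
lemma convexOn_of_monotone_line {E : Type*} [NormedAddCommGroup E] [NormedSpace ℝ E] {F : E → ℝ}
    {G : E → E →L[ℝ] ℝ} (hF : ∀ u, HasFDerivAt F (G u) u)
    (hG : ∀ u v, Monotone fun t : ℝ => G (u + t • v) v) : ConvexOn ℝ Set.univ F := by
  refine ⟨convex_univ, fun x _ y _ a b ha hb hab => ?_⟩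
  have h1 : ∀ t : ℝ, HasDerivAt (fun t : ℝ => F (x + t • (y - x))) (G (x + t • (y - x)) (y - x)) t := by
    intro t
    have hl : HasDerivAt (fun t : ℝ => x + t • (y - x)) (y - x) t := by
      simpa using ((hasDerivAt_id t).smul_const (y - x)).const_add x
    exact (hF _).comp_hasDerivAt t hl
  have h2 : ConvexOn ℝ Set.univ fun t : ℝ => F (x + t • (y - x)) := by
    refine Monotone.convexOn_univ_of_deriv (fun t => (h1 t).differentiableAt) ?_
    have : deriv (fun t : ℝ => F (x + t • (y - x))) = fun t => G (x + t • (y - x)) (y - x) :=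
      funext fun t => (h1 t).deriv
    rw [this]
    exact hG x (y - x)
  have h3 := h2.2 (Set.mem_univ 0) (Set.mem_univ 1) ha hb hab
  have e : x + (a • (0 : ℝ) + b • (1 : ℝ)) • (y - x) = a • x + b • y := by
    rw [← sub_eq_iff_eq_add'.2 hab.symm]
    simp only [smul_eq_mul, mul_zero, mul_one, zero_add]
    module
  simpa only [e, zero_smul, add_zero, one_smul, add_sub_cancel] using h3

section Hessian

variable {Fc : Finset (Finset (Fin N))} {I : Finset (Fin N) → ℝ}

lemma hess_symm (α : ℝ) (u v w : Fin N → ℝ) : hess Fc I α u v w = hess Fc I α u w v := by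
  unfold hess qff
  rw [cov_symm α u v w]
  congr 2
  exact Finset.sum_congr rfl fun i _ => Finset.sum_congr rfl fun j _ =>
    Finset.sum_congr rfl fun k _ => by rw [qf_symm]

/-- The Hessian is positive semi-definite, and vanishes only on vectors which are constant on all
faces, hence on constant vectors. -/
lemma hess_nonneg [NeZero N] (hT : IsTriangulation Fc) (hI : ∀ e ∈ edges Fc, 0 ≤ I e) {α : ℝ}
    (hα : α * (chi Fc : ℝ) ≤ 0) {u : Fin N → ℝ} (hu : u ∈ lnOmega Fc I) (v : Fin N → ℝ) :
    0 ≤ hess Fc I α u v v ∧ (hess Fc I α u v v = 0 → ∃ t : ℝ, v = fun _ => t) := by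
  have h1 : ∀ i j k, 0 ≤ ind Fc i j k * qff I i j k u v v := by
    intro i j k
    by_cases h : ({i, j, k} : Finset (Fin N)) ∈ Fc
    · obtain ⟨hA, hB, hC⟩ := weight_nonneg hT hI h
      exact mul_nonneg (ind_nonneg i j k) (qf_pos hA hB hC (discf_pos hT hI h hu) _ _ _).1
    · simp [ind, h]
  have h2 : 0 ≤ ∑ i, ∑ j, ∑ k, ind Fc i j k * qff I i j k u v v :=
    Finset.sum_nonneg fun i _ => Finset.sum_nonneg fun j _ => Finset.sum_nonneg fun k _ => h1 i j k
  have h3 : 0 ≤ -(2 * π * chi Fc * (α * cov α u v v)) := by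
    have := mul_nonneg (mul_nonneg Real.two_pi_pos.le (neg_nonneg.2 hα)) (cov_nonneg α u v)
    linarith
  unfold hess
  refine ⟨by linarith, fun h => const_of_faces hT fun i j k hf => ?_⟩
  have h4 : ∑ i, ∑ j, ∑ k, ind Fc i j k * qff I i j k u v v = 0 := by linarith
  rw [Finset.sum_eq_zero_iff_of_nonneg fun i _ => Finset.sum_nonneg fun j _ =>
    Finset.sum_nonneg fun k _ => h1 i j k] at h4
  have h5 := h4 i (Finset.mem_univ i)
  rw [Finset.sum_eq_zero_iff_of_nonneg fun j _ => Finset.sum_nonneg fun k _ => h1 i j k] at h5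
  have h6 := h5 j (Finset.mem_univ j)
  rw [Finset.sum_eq_zero_iff_of_nonneg fun k _ => h1 i j k] at h6
  have h7 := h6 k (Finset.mem_univ k)
  simp only [ind, hf, if_true, one_mul] at h7
  obtain ⟨hA, hB, hC⟩ := weight_nonneg hT hI hf
  exact ((qf_pos hA hB hC (discf_pos hT hI hf hu) _ _ _).2 h7).1

lemma gradForm_const [NeZero N] (hT : IsTriangulation Fc) (hI : ∀ e ∈ edges Fc, 0 ≤ I e) (α : ℝ)
    (u : Fin N → ℝ) (t : ℝ) : gradForm Fc I α u (fun _ => t) = 0 := by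
  rw [gradForm_apply, ← Finset.sum_mul, sum_extGrad hT hI, zero_mul]

lemma fderiv_gradForm [NeZero N] (hT : IsTriangulation Fc) (hI : ∀ e ∈ edges Fc, 0 ≤ I e) (α : ℝ)
    {u : Fin N → ℝ} (hu : u ∈ lnOmega Fc I) (v w : Fin N → ℝ) :
    fderiv ℝ (gradForm Fc I α) u v w = hess Fc I α u v w := by
  have hd : HasFDerivAt (gradForm Fc I α) (fderiv ℝ (gradForm Fc I α) u) u :=
    ((contDiffAt_gradForm (n := 1) hT hI α hu).differentiableAt one_ne_zero).hasFDerivAt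
  generalize fderiv ℝ (gradForm Fc I α) u = B at hd ⊢
  have hl : HasDerivAt (fun t : ℝ => u + t • v) v 0 := by
    simpa using ((hasDerivAt_id (0 : ℝ)).smul_const v).const_add u
  have h1 : HasDerivAt (fun t : ℝ => gradForm Fc I α (u + t • v) w) (B v w) 0 := by
    have := (HasFDerivAt.comp_hasDerivAt_of_eq (0 : ℝ) hd hl (by simp)).clm_apply
      (hasDerivAt_const (0 : ℝ) w)
    simpa only [Function.comp_def, map_zero, add_zero] using this
  have h2 := hasDerivAt_gradForm hT hI α u v w (t := 0) (by rwa [zero_smul, add_zero])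
  rw [zero_smul, add_zero] at h2
  exact h1.unique h2

/-- By the Gauss–Bonnet formula and symmetry, constant vectors are in the kernel. -/
lemma hess_const [NeZero N] (hT : IsTriangulation Fc) (hI : ∀ e ∈ edges Fc, 0 ≤ I e) (α : ℝ)
    {u : Fin N → ℝ} (hu : u ∈ lnOmega Fc I) (t : ℝ) (w : Fin N → ℝ) :
    hess Fc I α u (fun _ => t) w = 0 := by
  have h := hasDerivAt_gradForm hT hI α u w (fun _ => t) (t := 0) (by rwa [zero_smul, add_zero])
  simp only [gradForm_const hT hI, zero_smul, add_zero] at h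
  rw [hess_symm]
  exact h.unique (hasDerivAt_const _ _)

/-- The matrix of `extGrad` represents `hess`, which gives its semi-definiteness and its kernel; its rank
is given by the rank-nullity theorem. -/
lemma hessian_props [NeZero N] (hT : IsTriangulation Fc) (hI : ∀ e ∈ edges Fc, 0 ≤ I e) {α : ℝ}
    (hα : α * (chi Fc : ℝ) ≤ 0) {u : Fin N → ℝ} (hu : u ∈ lnOmega Fc I)
    {H : Matrix (Fin N) (Fin N) ℝ} (hH : ∀ i j : Fin N, H i j =
      deriv (fun s : ℝ => extGrad Fc I α (Function.update u j s) i) (u j)) :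
    H.PosSemidef ∧ H.rank = N - 1 ∧ ∀ x : Fin N → ℝ, H.mulVec x = 0 ↔ ∃ t : ℝ, x = fun _ => t := by
  set B := fderiv ℝ (gradForm Fc I α) u with hB
  have hBh : ∀ v w, B v w = hess Fc I α u v w := fderiv_gradForm hT hI α hu
  have hBs : ∀ v w, B v w = B w v := fun v w => by rw [hBh, hBh, hess_symm]
  have hHB : ∀ i j, H i j = B (Pi.single j 1) (Pi.single i 1) := by
    intro i j
    rw [hH]
    have hd : HasFDerivAt (gradForm Fc I α) B (Function.update u j (u j)) := by
      rw [Function.update_eq_self]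
      exact ((contDiffAt_gradForm (n := 1) hT hI α hu).differentiableAt one_ne_zero).hasFDerivAt
    have h1 := (hd.comp_hasDerivAt (u j) (hasDerivAt_update u j (u j))).clm_apply
      (hasDerivAt_const (u j) (Pi.single i (1 : ℝ)))
    simp only [Function.comp_def, gradForm_single, map_zero, add_zero] at h1
    exact h1.deriv
  have hmv : ∀ x i, H.mulVec x i = B x (Pi.single i 1) := by
    intro x i
    conv_rhs => rw [pi_eq_sum_univ' x]
    simp only [Matrix.mulVec, dotProduct, hHB, map_sum, map_smul, sum_apply, smul_apply, smul_eq_mul]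
    exact Finset.sum_congr rfl fun j _ => mul_comm _ _
  have hquad : ∀ x, x ⬝ᵥ H.mulVec x = B x x := by
    intro x
    conv_rhs => enter [2]; rw [pi_eq_sum_univ' x]
    simp only [dotProduct, hmv, map_sum, map_smul, smul_eq_mul]
  have hker : ∀ x : Fin N → ℝ, H.mulVec x = 0 ↔ ∃ t : ℝ, x = fun _ => t := by
    intro x
    constructor
    · intro h
      refine (hess_nonneg hT hI hα hu x).2 ?_
      rw [← hBh, ← hquad, h, dotProduct_zero]
    · rintro ⟨t, rfl⟩
      ext i
      rw [hmv, hBh, hess_const hT hI α hu, Pi.zero_apply]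
  refine ⟨Matrix.PosSemidef.of_dotProduct_mulVec_nonneg ?_ fun x => ?_, ?_, hker⟩
  · ext i j
    rw [Matrix.conjTranspose_apply, hHB, hHB, hBs]
    rfl
  · rw [star_trivial, hquad, hBh]
    exact (hess_nonneg hT hI hα hu x).1
  · have h1 := H.mulVecLin.finrank_range_add_finrank_ker
    have h2 : LinearMap.ker H.mulVecLin = Submodule.span ℝ {fun _ => (1 : ℝ)} := by
      ext x
      rw [LinearMap.mem_ker, Matrix.mulVecLin_apply, hker, Submodule.mem_span_singleton]
      constructor
      · rintro ⟨t, rfl⟩; exact ⟨t, by ext; simp⟩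
      · rintro ⟨t, rfl⟩; exact ⟨t, by ext; simp⟩
    have hne : (fun _ => 1 : Fin N → ℝ) ≠ 0 := fun h => one_ne_zero (congrFun h 0)
    rw [h2, finrank_span_singleton hne, Module.finrank_fin_fun] at h1
    unfold Matrix.rank
    omega

end Hessian

/-- if αχ(M) ≤ 0 there is an extended potential F̃ : ℝ^N → ℝ which
is convex on ℝ^N, C¹ on ℝ^N and C^∞ on ln Ω, whose partial derivatives are
∂F̃/∂u_i = K̃_i − s_α r_i^α, which is invariant under u ↦ u + t𝟙, and whose
Hessian (= the Jacobian of the gradient extGrad) at each u ∈ ln Ω is positive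
semi-definite of rank N−1 with kernel exactly the line {t𝟙}. -/
theorem stmt9 {N : ℕ} (Fc : Finset (Finset (Fin N))) (hT : IsTriangulation Fc)
    (I : Finset (Fin N) → ℝ) (hI : ∀ e ∈ edges Fc, 0 ≤ I e) (α : ℝ)
    (hαχ : α * (chi Fc : ℝ) ≤ 0) :
    ∃ F : (Fin N → ℝ) → ℝ,
      ConvexOn ℝ Set.univ F ∧
      ContDiff ℝ 1 F ∧
      ContDiffOn ℝ (⊤ : ℕ∞) F (lnOmega Fc I) ∧
      (∀ u : Fin N → ℝ, ∀ i : Fin N,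
        HasDerivAt (fun s : ℝ => F (Function.update u i s)) (extGrad Fc I α u i) (u i)) ∧
      (∀ u : Fin N → ℝ, ∀ t : ℝ, F (u + fun _ => t) = F u) ∧
      (∀ u ∈ lnOmega Fc I,
        ∀ H : Matrix (Fin N) (Fin N) ℝ,
          (∀ i j : Fin N, H i j =
            deriv (fun s : ℝ => extGrad Fc I α (Function.update u j s) i) (u j)) →
          H.PosSemidef ∧ H.rank = N - 1 ∧
            ∀ x : Fin N → ℝ, H.mulVec x = 0 ↔ ∃ t : ℝ, x = fun _ => t) := by
  obtain ⟨i0⟩ := hT.conn.nonempty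
  have : NeZero N := ⟨by rintro rfl; exact i0.elim0⟩
  obtain ⟨F, hF⟩ := exists_potential hT hI α
  have hfd : fderiv ℝ F = gradForm Fc I α := funext fun u => (hF u).fderiv
  refine ⟨F, convexOn_of_monotone_line hF (monotone_gradForm hT hI hαχ), ?_, ?_, ?_, ?_, ?_⟩
  · rw [contDiff_one_iff_fderiv, hfd]
    exact ⟨fun u => (hF u).differentiableAt, continuous_gradForm hT hI α⟩
  · rw [contDiffOn_infty_iff_fderiv_of_isOpen isOpen_lnOmega, hfd]
    exact ⟨fun u _ => (hF u).differentiableAt.differentiableWithinAt,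
      fun u hu => (contDiffAt_gradForm hT hI α hu).contDiffWithinAt⟩
  · intro u i
    have h1 : HasFDerivAt F (gradForm Fc I α u) (Function.update u i (u i)) := by
      rw [Function.update_eq_self]; exact hF u
    rw [← gradForm_single]
    exact h1.comp_hasDerivAt (u i) (hasDerivAt_update u i (u i))
  · intro u t
    have hl : ∀ s : ℝ, HasDerivAt (fun s : ℝ => F (u + s • fun _ => t)) 0 s := by
      intro s
      have hl : HasDerivAt (fun s : ℝ => u + s • fun _ => t) (fun _ => t) s := by
        simpa using ((hasDerivAt_id s).smul_const (fun _ : Fin N => t)).const_add u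
      rw [← gradForm_const hT hI α (u + s • fun _ => t) t]
      exact (hF _).comp_hasDerivAt s hl
    have h := is_const_of_deriv_eq_zero (fun s => (hl s).differentiableAt)
      (fun s => (hl s).deriv) 1 0
    simpa using h
  · exact fun u hu H hH => hessian_props hT hI hαχ hu hH

end IDCP
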